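/- The set ℒ = {f ∈ V : for every q > 0, sup_{0<r<1} (1/(2π)) ∫_{−π}^{π} |Im f(r e^{iθ})|^q dθ = ∞} — i.e., the set of u ∈ ⋂_{p<1} h^p whose normalized harmonic conjugate ũ belongs to no h^q with q > 0 — is a G_δ and dense subset of the metric space (V, d). -/

import Mathlib

open Complex Set Metric

noncomputable section

/-- `N_p`-mean of a real function on the circle of radius `r`:
`(1/2π) ∫_{-π}^{π} |u(r e^{iθ})|^p dθ`. -/
def circMeanR (p : ℝ) (u : ℂ → ℝ) (r : ℝ) : ℝ :=
  (1 / (2 * Real.pi)) * ∫ θ in (-Real.pi)..Real.pi,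
    |u ((r : ℂ) * Complex.exp ((θ : ℂ) * Complex.I))| ^ p

/-- The space `⋂_{p<1} h^p`, identified with the holomorphic functions `f = u + i ũ`
with `Im f(0) = 0` and `Re f ∈ h^p` for all `0 < p < 1`. -/
def HarmV : Type :=
  {f : ℂ → ℂ // DifferentiableOn ℂ f (Metric.ball (0 : ℂ) 1) ∧ (f 0).im = 0 ∧
    ∀ p ∈ Set.Ioo (0 : ℝ) 1, ∃ C : ℝ, ∀ r ∈ Set.Ioo (0 : ℝ) 1,
      circMeanR p (fun z => (f z).re) r ≤ C}

/-- `δ_p(f,g) = sup_{0<r<1} (1/2π) ∫_{-π}^{π} |Re(f-g)(r e^{iθ})|^p dθ`. -/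
def deltaP (p : ℝ) (f g : ℂ → ℂ) : ℝ :=
  ⨆ r : Set.Ioo (0 : ℝ) 1, circMeanR p (fun z => (f z - g z).re) r

/-- The metric `d(f,g) = Σ_{n≥1} 2^{-n} δ_{p_n}(f,g)/(1+δ_{p_n}(f,g))`, `p_n = n/(n+1)`
(indices shifted so `n : ℕ` starts at `0`). -/
def harmDist (f g : HarmV) : ℝ :=
  ∑' n : ℕ, (1 / 2 : ℝ) ^ (n + 1) *
    (deltaP (((n : ℝ) + 1) / ((n : ℝ) + 2)) f.1 g.1 /
      (1 + deltaP (((n : ℝ) + 1) / ((n : ℝ) + 2)) f.1 g.1))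

/-- The topology induced by a distance function via its open balls. -/
def ballTopology {α : Type*} (d : α → α → ℝ) : TopologicalSpace α :=
  TopologicalSpace.generateFrom {U | ∃ x ε, 0 < ε ∧ U = {y | d x y < ε}}

/-!
For fixed `q` and `r < 1`, the mean of `|Im f|^q` over the circle of radius `r` depends continuously
on `f ∈ V`, because smallness of `Re f` in `h^p` forces smallness of `f` on compact subsets of the
disc. The functions with `Im f ∈ h^q` for some `q > 0` therefore form a countable union of closed
sets. If `h` lies in `ℒ`, then for every `f` all but at most one of the perturbations `f + t h`
with `t` real lie in `ℒ`, so density only requires one element of `ℒ`.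

That element is a lacunary series `F_a(z) = ∑ aₙ v(z ^ 2ⁿ)` with `v(z) = z / (1 - z²)` and
`a ∈ ℓ^∞`. The real part of `v` is bounded by a Poisson-type kernel at `z²`, and the `p`-means of
the real parts of the terms telescope, so `Re F_a ∈ h^p` for every `p < 1`. On the circle
`|z| ^ 2ᴶ = 1/2` the first `J` terms have modulus at least `1/4`, so by Khinchin's inequality some
choice of signs `a` makes the `q`-mean of `|F_a|` at least a constant times `J ^ (q/2)`. Baire's
theorem in `ℓ^∞` then yields `a` with `|F_a|`, and hence `Im F_a`, in no `h^q`.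
-/

open Filter Topology MeasureTheory

/-! ### Means over circles -/

section CircleMeans

variable {ι : Type*} {p q r : ℝ} {u v w : ℂ → ℝ}

lemma circMeanR_eq_circleAverage (p : ℝ) (u : ℂ → ℝ) (r : ℝ) :
    circMeanR p u r = Real.circleAverage (fun z => |u z| ^ p) 0 r := by
  have hshift := intervalIntegral.integral_comp_add_right (a := 0) (b := 2 * Real.pi)
    (fun θ => |u (circleMap 0 r θ)| ^ p) (-Real.pi)
  rw [Real.circleAverage_eq_integral_add (-Real.pi), hshift, circMeanR, smul_eq_mul]
  simp only [circleMap_zero, one_div]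
  congr 3 <;> ring

lemma circleIntegrable_abs_rpow (hp : 0 ≤ p) (hu : ContinuousOn u (sphere 0 |r|)) :
    CircleIntegrable (fun z => |u z| ^ p) 0 r :=
  (hu.abs.rpow_const fun _ _ => Or.inr hp).circleIntegrable'

lemma circMeanR_nonneg (p : ℝ) (u : ℂ → ℝ) (r : ℝ) : 0 ≤ circMeanR p u r := by
  rw [circMeanR_eq_circleAverage]
  exact Real.circleAverage_nonneg_of_nonneg fun z _ => by positivity

lemma circMeanR_const_mul (p t : ℝ) (u : ℂ → ℝ) (r : ℝ) :
    circMeanR p (fun z => t * u z) r = |t| ^ p * circMeanR p u r := by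
  simp only [circMeanR_eq_circleAverage, abs_mul, Real.mul_rpow (abs_nonneg _) (abs_nonneg _)]
  exact Real.circleAverage_fun_smul (a := |t| ^ p)

lemma circMeanR_mono (hp : 0 ≤ p) (hw : ContinuousOn w (sphere 0 |r|))
    (hu : ContinuousOn u (sphere 0 |r|)) (h : ∀ z ∈ sphere 0 |r|, |w z| ≤ |u z|) :
    circMeanR p w r ≤ circMeanR p u r := by
  simp only [circMeanR_eq_circleAverage]
  exact Real.circleAverage_mono (circleIntegrable_abs_rpow hp hw) (circleIntegrable_abs_rpow hp hu)
    fun z hz => Real.rpow_le_rpow (abs_nonneg _) (h z hz) hp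

lemma rpow_le_one_add_rpow {x : ℝ} (hx : 0 ≤ x) (hq : 0 ≤ q) (hqp : q ≤ p) :
    x ^ q ≤ 1 + x ^ p := by
  rcases le_total x 1 with hx1 | hx1
  · exact (Real.rpow_le_one hx hx1 hq).trans (le_add_of_nonneg_right (by positivity))
  · exact (Real.rpow_le_rpow_of_exponent_le hx1 hqp).trans (le_add_of_nonneg_left zero_le_one)

lemma circMeanR_le_one_add_circMeanR (hq : 0 ≤ q) (hqp : q ≤ p)
    (hu : ContinuousOn u (sphere 0 |r|)) : circMeanR q u r ≤ 1 + circMeanR p u r := by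
  have hint := circleIntegrable_abs_rpow (hq.trans hqp) hu
  have hone : CircleIntegrable (fun _ => (1 : ℝ)) 0 r := circleIntegrable_const _ _ _
  simp only [circMeanR_eq_circleAverage]
  rw [← Real.circleAverage_const (1 : ℝ) 0 r, ← Real.circleAverage_fun_add hone hint]
  exact Real.circleAverage_mono (circleIntegrable_abs_rpow hq hu) (hone.add hint)
    fun z _ => rpow_le_one_add_rpow (abs_nonneg _) hq hqp

lemma circMeanR_le_add (hp : 0 ≤ p) (hp1 : p ≤ 1) (hw : ContinuousOn w (sphere 0 |r|))
    (hu : ContinuousOn u (sphere 0 |r|)) (hv : ContinuousOn v (sphere 0 |r|))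
    (h : ∀ z ∈ sphere 0 |r|, |w z| ≤ |u z| + |v z|) :
    circMeanR p w r ≤ circMeanR p u r + circMeanR p v r := by
  have hu' := circleIntegrable_abs_rpow hp hu
  have hv' := circleIntegrable_abs_rpow hp hv
  simp only [circMeanR_eq_circleAverage]
  rw [← Real.circleAverage_fun_add hu' hv']
  refine Real.circleAverage_mono (circleIntegrable_abs_rpow hp hw) (hu'.add hv') fun z hz => ?_
  exact (Real.rpow_le_rpow (abs_nonneg _) (h z hz) hp).trans
    (Real.rpow_add_le_add_rpow (abs_nonneg _) (abs_nonneg _) hp hp1)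

lemma circMeanR_sum_le (s : Finset ι) {f : ι → ℂ → ℝ} (hp : 0 < p) (hp1 : p ≤ 1)
    (hf : ∀ i ∈ s, ContinuousOn (f i) (sphere 0 |r|)) :
    circMeanR p (fun z => ∑ i ∈ s, f i z) r ≤ ∑ i ∈ s, circMeanR p (f i) r := by
  classical
  induction s using Finset.induction_on with
  | empty => simp [circMeanR, Real.zero_rpow hp.ne']
  | insert i s hi ih =>
    simp only [Finset.sum_insert hi, Finset.forall_mem_insert] at hf ⊢
    have hsum : ContinuousOn (fun z => ∑ j ∈ s, f j z) (sphere 0 |r|) :=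
      continuousOn_finsetSum s hf.2
    exact (circMeanR_le_add hp.le hp1 (hf.1.add hsum) hf.1 hsum fun z _ => abs_add_le _ _).trans
      (add_le_add_right (ih hf.2) _)

lemma circMeanR_comp_pow {m : ℕ} (hm : m ≠ 0) (hp : 0 ≤ p)
    (hu : ContinuousOn u (sphere 0 |r ^ m|)) :
    circMeanR p (fun z => u (z ^ m)) r = circMeanR p u (r ^ m) := by
  have hm' : (m : ℝ) ≠ 0 := Nat.cast_ne_zero.2 hm
  let g : ℝ → ℝ := fun θ => |u (circleMap 0 (r ^ m) θ)| ^ p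
  have hg : Function.Periodic g (2 * Real.pi) := fun θ => by
    simp only [g, periodic_circleMap 0 (r ^ m) θ]
  have hgc : Continuous g :=
    (hu.comp_continuous (continuous_circleMap 0 _) (circleMap_mem_sphere' 0 _)).abs.rpow_const
      fun _ => Or.inr hp
  have hwind : ∫ θ in (0 : ℝ)..m * (2 * Real.pi), g θ =
      m * ∫ θ in (0 : ℝ)..2 * Real.pi, g θ := by
    simpa using hg.intervalIntegral_add_zsmul_eq m 0 fun a b => hgc.intervalIntegrable a b
  have hsubst := intervalIntegral.integral_comp_mul_left (a := 0) (b := 2 * Real.pi) g hm'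
  rw [mul_zero, hwind, smul_eq_mul, inv_mul_cancel_left₀ hm'] at hsubst
  simp only [circMeanR_eq_circleAverage, Real.circleAverage_def, circleMap_zero_pow]
  exact congrArg _ hsubst

lemma tendsto_circMeanR {α : Type*} {l : Filter α} [l.IsCountablyGenerated] {f : α → ℂ → ℝ}
    (hp : 0 ≤ p) (hf : ∀ᶠ a in l, ContinuousOn (f a) (sphere 0 |r|))
    (hu : ContinuousOn u (sphere 0 |r|)) (hlim : TendstoUniformlyOn f u l (sphere 0 |r|)) :
    Tendsto (fun a => circMeanR p (f a) r) l (𝓝 (circMeanR p u r)) := by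
  obtain ⟨B, hB⟩ := (isCompact_sphere (0 : ℂ) |r|).exists_bound_of_continuousOn hu
  have hbound : ∀ᶠ a in l, ∀ z ∈ sphere (0 : ℂ) |r|, |f a z| ≤ B + 1 := by
    filter_upwards [Metric.tendstoUniformlyOn_iff.1 hlim 1 one_pos] with a ha z hz
    have hclose := ha z hz
    rw [dist_comm, Real.dist_eq] at hclose
    have hz' := hB z hz
    rw [Real.norm_eq_abs] at hz'
    linarith [abs_sub_abs_le_abs_sub (f a z) (u z)]
  have hmem : ∀ θ, circleMap 0 r θ ∈ sphere (0 : ℂ) |r| := circleMap_mem_sphere' 0 r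
  simp only [circMeanR_eq_circleAverage, Real.circleAverage_def]
  refine (intervalIntegral.tendsto_integral_filter_of_dominated_convergence
    (fun _ => (B + 1) ^ p) ?_ ?_ intervalIntegrable_const ?_).const_smul _
  · filter_upwards [hf] with a ha
    have hcont : Continuous fun θ => |f a (circleMap 0 r θ)| ^ p :=
      (ha.comp_continuous (continuous_circleMap 0 r) hmem).abs.rpow_const fun _ => Or.inr hp
    exact hcont.aestronglyMeasurable
  · filter_upwards [hbound] with a ha
    refine .of_forall fun θ _ => ?_
    rw [Real.norm_of_nonneg (by positivity)]
    exact Real.rpow_le_rpow (abs_nonneg _) (ha _ (hmem θ)) hp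
  · exact .of_forall fun θ _ => (hlim.tendsto_at (hmem θ)).abs.rpow_const (Or.inr hp)

end CircleMeans

/-! ### The class `h^p` -/

/-- Membership of a real function on the unit disc in the Hardy class `h^p`, apart from
harmonicity: its means of order `p` over the circles of radius `r < 1` are bounded. -/
def MemHardy (p : ℝ) (u : ℂ → ℝ) : Prop :=
  ∃ C : ℝ, ∀ r ∈ Ioo (0 : ℝ) 1, circMeanR p u r ≤ C

section MemHardy

variable {p q r : ℝ} {u v w : ℂ → ℝ}

lemma sphere_subset_unitBall (hr : r ∈ Ioo (0 : ℝ) 1) : sphere (0 : ℂ) |r| ⊆ ball 0 1 := by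
  rw [abs_of_pos hr.1]
  exact sphere_subset_ball hr.2

lemma MemHardy.of_abs_le_add (hp : 0 ≤ p) (hp1 : p ≤ 1) (hw : ContinuousOn w (ball 0 1))
    (hu : ContinuousOn u (ball 0 1)) (hv : ContinuousOn v (ball 0 1))
    (h : ∀ z, |w z| ≤ |u z| + |v z|) (hup : MemHardy p u) (hvp : MemHardy p v) :
    MemHardy p w := by
  obtain ⟨A, hA⟩ := hup
  obtain ⟨B, hB⟩ := hvp
  refine ⟨A + B, fun r hr => ?_⟩
  have hsub := sphere_subset_unitBall hr
  exact (circMeanR_le_add hp hp1 (hw.mono hsub) (hu.mono hsub) (hv.mono hsub) fun z _ => h z).trans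
    (add_le_add (hA r hr) (hB r hr))

lemma MemHardy.add (hp : 0 ≤ p) (hp1 : p ≤ 1) (hu : ContinuousOn u (ball 0 1))
    (hv : ContinuousOn v (ball 0 1)) (hup : MemHardy p u) (hvp : MemHardy p v) :
    MemHardy p fun z => u z + v z :=
  .of_abs_le_add hp hp1 (hu.add hv) hu hv (fun _ => abs_add_le _ _) hup hvp

lemma MemHardy.sub (hp : 0 ≤ p) (hp1 : p ≤ 1) (hu : ContinuousOn u (ball 0 1))
    (hv : ContinuousOn v (ball 0 1)) (hup : MemHardy p u) (hvp : MemHardy p v) :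
    MemHardy p fun z => u z - v z :=
  .of_abs_le_add hp hp1 (hu.sub hv) hu hv (fun _ => abs_sub _ _) hup hvp

lemma MemHardy.const_mul (t : ℝ) (hu : MemHardy p u) : MemHardy p fun z => t * u z := by
  obtain ⟨C, hC⟩ := hu
  refine ⟨|t| ^ p * C, fun r hr => ?_⟩
  rw [circMeanR_const_mul]
  exact mul_le_mul_of_nonneg_left (hC r hr) (by positivity)

lemma MemHardy.mono_exponent (hq : 0 ≤ q) (hqp : q ≤ p) (hu : ContinuousOn u (ball 0 1))
    (hup : MemHardy p u) : MemHardy q u := by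
  obtain ⟨C, hC⟩ := hup
  exact ⟨1 + C, fun r hr =>
    (circMeanR_le_one_add_circMeanR hq hqp (hu.mono (sphere_subset_unitBall hr))).trans
      (add_le_add_right (hC r hr) _)⟩

lemma setOf_exists_memHardy_eq_iUnion {X : Type*} {u : X → ℂ → ℝ}
    (hu : ∀ x, ContinuousOn (u x) (ball 0 1)) :
    {x | ∃ q > 0, MemHardy q (u x)} =
      ⋃ (m : ℕ) (k : ℕ), {x | ∀ r ∈ Ioo (0 : ℝ) 1, circMeanR (1 / (m + 1)) (u x) r ≤ k} := by
  ext x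
  simp only [mem_ofPred_eq, mem_iUnion]
  constructor
  · rintro ⟨q, hq, hxq⟩
    obtain ⟨m, hm⟩ := exists_nat_one_div_lt hq
    obtain ⟨C, hC⟩ := hxq.mono_exponent Nat.one_div_pos_of_nat.le hm.le (hu x)
    obtain ⟨k, hk⟩ := exists_nat_ge C
    exact ⟨m, k, fun r hr => (hC r hr).trans hk⟩
  · rintro ⟨m, k, h⟩
    exact ⟨1 / (m + 1), Nat.one_div_pos_of_nat, k, h⟩

lemma isClosed_setOf_forall_circMeanR_le {X : Type*} [TopologicalSpace X] {u : X → ℂ → ℝ}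
    (hu : ∀ r ∈ Ioo (0 : ℝ) 1, Continuous fun x => circMeanR q (u x) r) (C : ℝ) :
    IsClosed {x | ∀ r ∈ Ioo (0 : ℝ) 1, circMeanR q (u x) r ≤ C} := by
  simp only [ofPred_forall]
  exact isClosed_biInter fun r hr => isClosed_le (hu r hr) continuous_const

end MemHardy

/-! ### Growth of harmonic and holomorphic functions with bounded means -/

section Growth

open InnerProductSpace

variable {p r R B δ : ℝ} {u : ℂ → ℝ} {f : ℂ → ℂ} {z : ℂ}

lemma abs_poissonKernel_le {w : ℂ} (hw : w ∈ sphere 0 R) (hz : z ∈ ball 0 R) :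
    |poissonKernel 0 z w| ≤ (R + ‖z‖) / (R - ‖z‖) := by
  have hlower := le_re_herglotzRieszKernel hw hz
  have hupper := re_herglotzRieszKernel_le hw hz
  rw [mem_ball_zero_iff] at hz
  have hR : 0 ≤ R - ‖z‖ := (sub_pos.2 hz).le
  have hnonneg : 0 ≤ (R - ‖z‖) / (R + ‖z‖) :=
    div_nonneg hR (by linarith [norm_nonneg z])
  rw [poissonKernel_eq_re_herglotzRieszKernel]
  simp only [sub_zero, Function.comp_apply, herglotzRieszKernel] at hlower hupper ⊢
  rwa [abs_of_nonneg (hnonneg.trans hlower)]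

lemma continuousOn_poissonKernel (hz : z ∈ ball 0 R) :
    ContinuousOn (poissonKernel 0 z) (sphere 0 R) := by
  have hne : ∀ w ∈ sphere (0 : ℂ) R, ‖w - z‖ ^ 2 ≠ 0 := fun w hw => by
    rw [mem_sphere_zero_iff_norm] at hw
    rw [mem_ball_zero_iff] at hz
    have hwz : w ≠ z := fun h => hz.ne (h ▸ hw)
    simpa [sub_eq_zero] using hwz
  have hform : poissonKernel 0 z = fun w => (‖w‖ ^ 2 - ‖z‖ ^ 2) / ‖w - z‖ ^ 2 := by
    ext w
    simp [poissonKernel]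
  rw [hform]
  exact ContinuousOn.div (by fun_prop) (by fun_prop) hne

lemma abs_le_mul_circMeanR_one (hu : HarmonicOnNhd u (closedBall 0 R)) (hz : z ∈ ball 0 R) :
    |u z| ≤ (R + ‖z‖) / (R - ‖z‖) * circMeanR 1 u R := by
  have hR : |R| = R := abs_of_pos (pos_of_mem_ball hz)
  have hu' : ContinuousOn u (sphere 0 R) := hu.continuousOn.mono sphere_subset_closedBall
  have hint : CircleIntegrable (fun w => |(poissonKernel 0 z • u) w|) 0 R := by
    refine ContinuousOn.circleIntegrable' ?_
    rw [hR]
    exact ((continuousOn_poissonKernel hz).smul hu').abs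
  have hint' : CircleIntegrable (fun w => (R + ‖z‖) / (R - ‖z‖) * |u w|) 0 R := by
    refine ContinuousOn.circleIntegrable' ?_
    rw [hR]
    exact continuousOn_const.mul hu'.abs
  calc |u z|
      = |Real.circleAverage (poissonKernel 0 z • u) 0 R| := by
        rw [hu.circleAverage_poissonKernel_smul hz]
    _ ≤ Real.circleAverage (fun w => |(poissonKernel 0 z • u) w|) 0 R :=
        Real.abs_circleAverage_le_circleAverage_abs
    _ ≤ Real.circleAverage (fun w => (R + ‖z‖) / (R - ‖z‖) * |u w|) 0 R := by
        refine Real.circleAverage_mono hint hint' fun w hw => ?_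
        rw [hR] at hw
        rw [Pi.smul_apply', smul_eq_mul, abs_mul]
        exact mul_le_mul_of_nonneg_right (abs_poissonKernel_le hw hz) (abs_nonneg _)
    _ = (R + ‖z‖) / (R - ‖z‖) * circMeanR 1 u R := by
        simp only [circMeanR_eq_circleAverage, Real.rpow_one]
        exact Real.circleAverage_fun_smul (a := (R + ‖z‖) / (R - ‖z‖))

lemma circMeanR_one_le_rpow_mul_circMeanR (hp : 0 ≤ p) (hp1 : p ≤ 1)
    (hu : ContinuousOn u (sphere 0 |r|)) (hB : ∀ z ∈ sphere 0 |r|, |u z| ≤ B) :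
    circMeanR 1 u r ≤ B ^ (1 - p) * circMeanR p u r := by
  simp only [circMeanR_eq_circleAverage]
  rw [← smul_eq_mul, ← Real.circleAverage_fun_smul]
  refine Real.circleAverage_mono (circleIntegrable_abs_rpow zero_le_one hu)
    ((circleIntegrable_abs_rpow hp hu).const_fun_smul) fun z hz => ?_
  calc |u z| ^ (1 : ℝ) = |u z| ^ (1 - p) * |u z| ^ p := by
        rw [← Real.rpow_add_of_nonneg (abs_nonneg _) (sub_nonneg.2 hp1) hp, sub_add_cancel]
    _ ≤ B ^ (1 - p) * |u z| ^ p := by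
        gcongr
        exact hB z hz

lemma abs_le_two_rpow_mul_abs_of_isMaxOn {w : ℂ} (hp : 0 < p) (hz : z ∈ ball 0 R)
    (hmax : IsMaxOn (fun w => (R - ‖w‖) * |u w| ^ p) (closedBall 0 R) z)
    (hw : ‖w‖ = (R + ‖z‖) / 2) : |u w| ≤ 2 ^ p⁻¹ * |u z| := by
  rw [mem_ball_zero_iff] at hz
  have hmaxw : (R - ‖w‖) * |u w| ^ p ≤ (R - ‖z‖) * |u z| ^ p :=
    hmax (mem_closedBall_zero_iff.2 (by linarith))
  rw [hw, show R - (R + ‖z‖) / 2 = (R - ‖z‖) / 2 by ring] at hmaxw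
  rw [← Real.rpow_le_rpow_iff (abs_nonneg _) (by positivity) hp,
    Real.mul_rpow (by positivity) (abs_nonneg _), Real.rpow_inv_rpow zero_le_two hp.ne']
  nlinarith

/- The Poisson bound on the circle halfway between `z` and the circle of radius `R` closes up,
because there `|u|` is at most `2 ^ p⁻¹ * |u z|` by maximality. -/
lemma sub_norm_mul_rpow_le_of_isMaxOn (hu : HarmonicOnNhd u (ball 0 1)) (hp : 0 < p)
    (hp1 : p ≤ 1) (hδ : ∀ r ∈ Ioo (0 : ℝ) 1, circMeanR p u r ≤ δ) (hR : R < 1)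
    (hz : z ∈ ball 0 R) (huz : 0 < |u z|)
    (hmax : IsMaxOn (fun w => (R - ‖w‖) * |u w| ^ p) (closedBall 0 R) z) :
    (R - ‖z‖) * |u z| ^ p ≤ 2 ^ (1 + p⁻¹) * δ := by
  have hzR : ‖z‖ < R := mem_ball_zero_iff.1 hz
  have hD : 0 < R - ‖z‖ := sub_pos.2 hzR
  set s := (R + ‖z‖) / 2 with hs
  have hs01 : s ∈ Ioo (0 : ℝ) 1 := ⟨by linarith [norm_nonneg z], by linarith⟩
  have hmean : circMeanR 1 u s ≤ (2 ^ p⁻¹ * |u z|) ^ (1 - p) * δ := by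
    refine (circMeanR_one_le_rpow_mul_circMeanR hp.le hp1
      (hu.continuousOn.mono (sphere_subset_unitBall hs01)) fun w hw => ?_).trans
      (by gcongr; exact hδ s hs01)
    rw [abs_of_pos hs01.1, mem_sphere_zero_iff_norm] at hw
    exact abs_le_two_rpow_mul_abs_of_isMaxOn hp hz hmax hw
  have hpoisson : |u z| ≤ 4 / (R - ‖z‖) * circMeanR 1 u s := by
    refine (abs_le_mul_circMeanR_one (hu.mono (closedBall_subset_ball hs01.2))
      (mem_ball_zero_iff.2 (by linarith))).trans ?_
    refine mul_le_mul_of_nonneg_right ?_ (circMeanR_nonneg _ _ _)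
    rw [div_le_div_iff₀ (by linarith) hD]
    nlinarith
  have hconst : (4 : ℝ) * (2 ^ p⁻¹) ^ (1 - p) = 2 ^ (1 + p⁻¹) := by
    rw [show (4 : ℝ) = 2 ^ (2 : ℝ) by norm_num, ← Real.rpow_mul zero_le_two,
      ← Real.rpow_add two_pos, mul_sub, inv_mul_cancel₀ hp.ne']
    ring_nf
  refine le_of_mul_le_mul_right ?_ (Real.rpow_pos_of_pos huz (1 - p))
  calc (R - ‖z‖) * |u z| ^ p * |u z| ^ (1 - p) = (R - ‖z‖) * |u z| := by
        rw [mul_assoc, ← Real.rpow_add huz, add_sub_cancel, Real.rpow_one]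
    _ ≤ (R - ‖z‖) * (4 / (R - ‖z‖) * ((2 ^ p⁻¹ * |u z|) ^ (1 - p) * δ)) := by
        gcongr
        exact hpoisson.trans (by gcongr)
    _ = 4 * (2 ^ p⁻¹ * |u z|) ^ (1 - p) * δ := by field_simp
    _ = 2 ^ (1 + p⁻¹) * δ * |u z| ^ (1 - p) := by
        rw [Real.mul_rpow (by positivity) huz.le, ← hconst]
        ring

lemma sub_norm_mul_rpow_le (hu : HarmonicOnNhd u (ball 0 1)) (hp : 0 < p) (hp1 : p ≤ 1)
    (hδ : ∀ r ∈ Ioo (0 : ℝ) 1, circMeanR p u r ≤ δ) (hR : R ∈ Ioo (0 : ℝ) 1)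
    (hz : z ∈ ball 0 R) : (R - ‖z‖) * |u z| ^ p ≤ 2 ^ (1 + p⁻¹) * δ := by
  have hcont : ContinuousOn (fun w => (R - ‖w‖) * |u w| ^ p) (closedBall 0 R) :=
    (continuousOn_const.sub continuousOn_id.norm).mul
      ((hu.continuousOn.mono (closedBall_subset_ball hR.2)).abs.rpow_const
        fun _ _ => Or.inr hp.le)
  obtain ⟨z₀, hz₀, hmax⟩ := (isCompact_closedBall (0 : ℂ) R).exists_isMaxOn
    ⟨z, ball_subset_closedBall hz⟩ hcont
  refine (hmax (ball_subset_closedBall hz)).trans ?_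
  have hδ0 : 0 ≤ δ := (circMeanR_nonneg p u R).trans (hδ R hR)
  rcases (mem_closedBall_zero_iff.1 hz₀).eq_or_lt with hboundary | hinterior
  · simp only [hboundary, sub_self, zero_mul]
    positivity
  rcases (abs_nonneg (u z₀)).eq_or_lt with huz | huz
  · simp only [← huz, Real.zero_rpow hp.ne', mul_zero]
    positivity
  · exact sub_norm_mul_rpow_le_of_isMaxOn hu hp hp1 hδ hR.2 (mem_ball_zero_iff.2 hinterior) huz hmax

lemma one_sub_norm_mul_rpow_le (hu : HarmonicOnNhd u (ball 0 1)) (hp : 0 < p) (hp1 : p ≤ 1)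
    (hδ : ∀ r ∈ Ioo (0 : ℝ) 1, circMeanR p u r ≤ δ) (hz : z ∈ ball 0 1) :
    (1 - ‖z‖) * |u z| ^ p ≤ 2 ^ (1 + p⁻¹) * δ := by
  have hlim : Tendsto (fun R : ℝ => (R - ‖z‖) * |u z| ^ p) (𝓝[<] 1)
      (𝓝 ((1 - ‖z‖) * |u z| ^ p)) :=
    ((continuous_id.sub continuous_const).mul continuous_const).continuousWithinAt
  rw [mem_ball_zero_iff] at hz
  refine le_of_tendsto hlim ?_
  filter_upwards [Ioo_mem_nhdsLT hz] with R hR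
  exact sub_norm_mul_rpow_le hu hp hp1 hδ ⟨(norm_nonneg z).trans_lt hR.1, hR.2⟩
    (mem_ball_zero_iff.2 hR.1)

lemma harmonicOnNhd_re (hf : DifferentiableOn ℂ f (ball 0 1)) :
    HarmonicOnNhd (fun z => (f z).re) (ball 0 1) := fun _ hz =>
  (hf.analyticAt (isOpen_ball.mem_nhds hz)).harmonicAt_re

lemma abs_re_le_of_circMeanR_re_le (hf : DifferentiableOn ℂ f (ball 0 1)) (hp : 0 < p)
    (hp1 : p ≤ 1) (hδ : ∀ r ∈ Ioo (0 : ℝ) 1, circMeanR p (fun z => (f z).re) r ≤ δ)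
    (hr : r < 1) (hz : ‖z‖ ≤ r) :
    |(f z).re| ≤ (2 ^ (1 + p⁻¹) * δ / (1 - r)) ^ p⁻¹ := by
  have hgrowth := one_sub_norm_mul_rpow_le (harmonicOnNhd_re hf) hp hp1 hδ
    (mem_ball_zero_iff.2 (hz.trans_lt hr))
  have hpow : |(f z).re| ^ p ≤ 2 ^ (1 + p⁻¹) * δ / (1 - r) := by
    rw [le_div_iff₀ (sub_pos.2 hr), mul_comm]
    refine le_trans ?_ hgrowth
    gcongr
  have hnonneg : 0 ≤ |(f z).re| ^ p := by positivity
  exact (Real.le_rpow_inv_iff_of_pos (abs_nonneg _) (hnonneg.trans hpow) hp).2 hpow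

lemma norm_le_of_circMeanR_re_le (hf : DifferentiableOn ℂ f (ball 0 1)) (hf0 : (f 0).im = 0)
    (hp : 0 < p) (hp1 : p ≤ 1) (hδ0 : 0 < δ)
    (hδ : ∀ r ∈ Ioo (0 : ℝ) 1, circMeanR p (fun z => (f z).re) r ≤ δ) (hr : r < 1)
    (hz : ‖z‖ ≤ r) :
    ‖f z‖ ≤ 8 / (1 - r) * (2 ^ (2 + p⁻¹) * δ / (1 - r)) ^ p⁻¹ := by
  have hr0 : 0 < 1 - r := sub_pos.2 hr
  have hz0 := norm_nonneg z
  set R := (1 + r) / 2 with hR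
  have hR1 : R < 1 := by linarith
  set M := (2 ^ (2 + p⁻¹) * δ / (1 - r)) ^ p⁻¹ with hM
  have hM0 : 0 < M := by positivity
  have hre : ∀ w : ℂ, ‖w‖ ≤ R → |(f w).re| ≤ M := fun w hw => by
    have hconst : (2 : ℝ) ^ (1 + p⁻¹) * δ / (1 - R) = 2 ^ (2 + p⁻¹) * δ / (1 - r) := by
      rw [show (2 : ℝ) + p⁻¹ = 1 + (1 + p⁻¹) by ring, Real.rpow_add two_pos 1 (1 + p⁻¹),
        Real.rpow_one,
        show 1 - R = (1 - r) / 2 by rw [hR]; ring]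
      field_simp
    rw [hM, ← hconst]
    exact abs_re_le_of_circMeanR_re_le hf hp hp1 hδ hR1 hw
  have hf0M : ‖f 0‖ ≤ M := by
    rw [show f 0 = ((f 0).re : ℂ) from Complex.ext rfl hf0, norm_real, Real.norm_eq_abs]
    exact hre 0 (by rw [norm_zero]; linarith)
  have hborel := borelCaratheodory hM0 (hf.mono (ball_subset_ball hR1.le))
    (fun w hw => (le_abs_self _).trans (hre w (mem_ball_zero_iff.1 hw).le)) (by linarith)
    (mem_ball_zero_iff.2 (show ‖z‖ < R by linarith))
  have hgap : (1 - r) / 2 ≤ R - ‖z‖ := by linarith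
  calc ‖f z‖ ≤ (2 * M * ‖z‖ + ‖f 0‖ * (R + ‖z‖)) / (R - ‖z‖) := by rwa [add_div]
    _ ≤ (2 * M * 1 + M * (1 + 1)) / ((1 - r) / 2) := by gcongr <;> linarith
    _ = 8 / (1 - r) * M := by field_simp; ring

end Growth

/-! ### The metric of `⋂_{p<1} h^p` -/

lemma ballTopology_dist {α : Type*} [PseudoMetricSpace α] :
    ballTopology (dist : α → α → ℝ) = UniformSpace.toTopologicalSpace := by
  refine le_antisymm (fun U hU => ?_) (le_generateFrom ?_)
  · refine @isOpen_iff_forall_mem_open _ (_) |>.2 fun x hx => ?_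
    obtain ⟨ε, hε, hball⟩ := Metric.isOpen_iff.1 hU x hx
    exact ⟨{y | dist x y < ε}, fun y hy => hball (by simpa [dist_comm] using hy),
      .basic _ ⟨x, ε, hε, rfl⟩, by simpa using hε⟩
  · rintro _ ⟨x, ε, -, rfl⟩
    exact isOpen_lt (continuous_const.dist continuous_id) continuous_const

lemma div_one_add_le_add {x y z : ℝ} (hx : 0 ≤ x) (hy : 0 ≤ y) (hz : 0 ≤ z) (h : z ≤ x + y) :
    z / (1 + z) ≤ x / (1 + x) + y / (1 + y) :=
  calc z / (1 + z) ≤ (x + y) / (1 + (x + y)) := by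
        rw [div_le_div_iff₀ (by positivity) (by positivity)]
        nlinarith
    _ = x / (1 + (x + y)) + y / (1 + (x + y)) := add_div _ _ _
    _ ≤ x / (1 + x) + y / (1 + y) := by gcongr <;> linarith

lemma div_one_add_le_one {x : ℝ} (hx : 0 ≤ x) : x / (1 + x) ≤ 1 :=
  div_le_one_of_le₀ (by linarith) (by linarith)

lemma deltaP_nonneg (p : ℝ) (f g : ℂ → ℂ) : 0 ≤ deltaP p f g :=
  Real.iSup_nonneg fun _ => circMeanR_nonneg _ _ _

lemma deltaP_self {p : ℝ} (hp : 0 < p) (f : ℂ → ℂ) : deltaP p f f = 0 := by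
  simp [deltaP, circMeanR, Real.zero_rpow hp.ne']

lemma deltaP_comm (p : ℝ) (f g : ℂ → ℂ) : deltaP p f g = deltaP p g f := by
  simp only [deltaP, circMeanR, sub_re, abs_sub_comm]

namespace HarmV

variable {p q r : ℝ} (f g h : HarmV)

lemma continuousOn_re : ContinuousOn (fun z => (f.1 z).re) (ball 0 1) :=
  continuous_re.comp_continuousOn f.2.1.continuousOn

lemma continuousOn_im : ContinuousOn (fun z => (f.1 z).im) (ball 0 1) :=
  continuous_im.comp_continuousOn f.2.1.continuousOn

lemma memHardy_re (hp : p ∈ Ioo (0 : ℝ) 1) : MemHardy p fun z => (f.1 z).re :=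
  f.2.2.2 p hp

lemma continuousOn_re_sub : ContinuousOn (fun z => (f.1 z - g.1 z).re) (ball 0 1) :=
  continuous_re.comp_continuousOn (f.2.1.continuousOn.sub g.2.1.continuousOn)

lemma memHardy_re_sub (hp : p ∈ Ioo (0 : ℝ) 1) : MemHardy p fun z => (f.1 z - g.1 z).re := by
  simp only [sub_re]
  exact (f.memHardy_re hp).sub hp.1.le hp.2.le f.continuousOn_re g.continuousOn_re
    (g.memHardy_re hp)

lemma circMeanR_re_sub_le_deltaP (hp : p ∈ Ioo (0 : ℝ) 1) (hr : r ∈ Ioo (0 : ℝ) 1) :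
    circMeanR p (fun z => (f.1 z - g.1 z).re) r ≤ deltaP p f.1 g.1 := by
  obtain ⟨C, hC⟩ := f.memHardy_re_sub g hp
  have hbdd : BddAbove (range fun r : Ioo (0 : ℝ) 1 =>
      circMeanR p (fun z => (f.1 z - g.1 z).re) r) :=
    ⟨C, forall_mem_range.2 fun r => hC r r.2⟩
  exact le_ciSup hbdd ⟨r, hr⟩

lemma deltaP_triangle (hp : p ∈ Ioo (0 : ℝ) 1) :
    deltaP p f.1 h.1 ≤ deltaP p f.1 g.1 + deltaP p g.1 h.1 := by
  have : Nonempty (Ioo (0 : ℝ) 1) := nonempty_Ioo_subtype one_pos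
  refine ciSup_le fun r => ?_
  have hsub := sphere_subset_unitBall r.2
  refine (circMeanR_le_add hp.1.le hp.2.le ((f.continuousOn_re_sub h).mono hsub)
    ((f.continuousOn_re_sub g).mono hsub) ((g.continuousOn_re_sub h).mono hsub)
    fun z _ => ?_).trans (add_le_add (f.circMeanR_re_sub_le_deltaP g hp r.2)
      (g.circMeanR_re_sub_le_deltaP h hp r.2))
  simp only [sub_re]
  exact abs_sub_le _ _ _

/-- The exponents `p_n = n / (n + 1)`, `n ≥ 1`, occurring in `harmDist`, indexed from `n = 0`. -/
def exponent (n : ℕ) : ℝ := ((n : ℝ) + 1) / ((n : ℝ) + 2)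

lemma exponent_mem_Ioo (n : ℕ) : exponent n ∈ Ioo (0 : ℝ) 1 := by
  refine ⟨by unfold exponent; positivity, ?_⟩
  rw [exponent, div_lt_one (by positivity)]
  linarith

/-- The summand of index `n` in the series defining `harmDist`. -/
def distTerm (n : ℕ) : ℝ :=
  (1 / 2 : ℝ) ^ (n + 1) * (deltaP (exponent n) f.1 g.1 / (1 + deltaP (exponent n) f.1 g.1))

lemma harmDist_eq_tsum : harmDist f g = ∑' n, distTerm f g n := rfl

lemma distTerm_nonneg (n : ℕ) : 0 ≤ distTerm f g n := by
  have := deltaP_nonneg (exponent n) f.1 g.1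
  unfold distTerm
  positivity

lemma distTerm_le_half_pow (n : ℕ) : distTerm f g n ≤ (1 / 2 : ℝ) ^ (n + 1) :=
  mul_le_of_le_one_right (by positivity) (div_one_add_le_one (deltaP_nonneg _ _ _))

lemma distTerm_le_deltaP (n : ℕ) : distTerm f g n ≤ deltaP (exponent n) f.1 g.1 := by
  have hδ := deltaP_nonneg (exponent n) f.1 g.1
  refine (mul_le_of_le_one_left (by positivity) (pow_le_one₀ (by norm_num) (by norm_num))).trans ?_
  exact div_le_self hδ (by linarith)

lemma summable_half_pow_succ : Summable fun n : ℕ => (1 / 2 : ℝ) ^ (n + 1) :=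
  (summable_nat_add_iff 1).2 summable_geometric_two

lemma summable_distTerm : Summable (distTerm f g) :=
  .of_nonneg_of_le (distTerm_nonneg f g) (distTerm_le_half_pow f g) summable_half_pow_succ

lemma distTerm_triangle (n : ℕ) : distTerm f h n ≤ distTerm f g n + distTerm g h n := by
  unfold distTerm
  rw [← mul_add]
  exact mul_le_mul_of_nonneg_left (div_one_add_le_add (deltaP_nonneg _ _ _) (deltaP_nonneg _ _ _)
    (deltaP_nonneg _ _ _) (deltaP_triangle f g h (exponent_mem_Ioo n))) (by positivity)

instance : PseudoMetricSpace HarmV where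
  dist := harmDist
  dist_self f := by simp [harmDist_eq_tsum, distTerm, deltaP_self (exponent_mem_Ioo _).1]
  dist_comm f g := by simp only [harmDist, deltaP_comm _ f.1 g.1]
  dist_triangle f g h := by
    simp only [harmDist_eq_tsum]
    rw [← (summable_distTerm f g).tsum_add (summable_distTerm g h)]
    exact (summable_distTerm f h).tsum_le_tsum (distTerm_triangle f g h)
      ((summable_distTerm f g).add (summable_distTerm g h))

lemma eventually_deltaP_exponent_zero_lt {δ : ℝ} (hδ : 0 < δ) :
    ∀ᶠ g in 𝓝 f, deltaP (exponent 0) g.1 f.1 < δ := by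
  have hpos : 0 < (1 / 2 : ℝ) ^ 1 * (δ / (1 + δ)) := by positivity
  filter_upwards [Metric.ball_mem_nhds f hpos] with g hg
  have hterm : distTerm g f 0 < (1 / 2 : ℝ) ^ 1 * (δ / (1 + δ)) :=
    ((summable_distTerm g f).le_tsum 0 fun n _ => distTerm_nonneg g f n).trans_lt hg
  have hδ' := deltaP_nonneg (exponent 0) g.1 f.1
  have hlt := lt_of_mul_lt_mul_left hterm (by positivity)
  rw [div_lt_div_iff₀ (by linarith) (by linarith)] at hlt
  linarith

lemma tendstoUniformlyOn_nhds (hr : r < 1) :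
    TendstoUniformlyOn (fun g : HarmV => g.1) f.1 (𝓝 f) (closedBall 0 r) := by
  rw [Metric.tendstoUniformlyOn_iff]
  intro ε hε
  have hp := exponent_mem_Ioo 0
  set bound : ℝ → ℝ := fun δ =>
    8 / (1 - r) * (2 ^ (2 + (exponent 0)⁻¹) * δ / (1 - r)) ^ (exponent 0)⁻¹ with hbound
  have hcont : Continuous bound :=
    continuous_const.mul ((by fun_prop : Continuous fun δ : ℝ =>
      2 ^ (2 + (exponent 0)⁻¹) * δ / (1 - r)).rpow_const fun _ => Or.inr (inv_pos.2 hp.1).le)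
  have hzero : bound 0 = 0 := by simp [hbound, Real.zero_rpow (inv_pos.2 hp.1).ne']
  have hsmall : ∀ᶠ δ in 𝓝[>] (0 : ℝ), bound δ < ε :=
    ((hcont.tendsto 0).mono_left nhdsWithin_le_nhds).eventually (gt_mem_nhds (by rwa [hzero]))
  obtain ⟨δ, hδε, hδ⟩ := (hsmall.and self_mem_nhdsWithin).exists
  filter_upwards [f.eventually_deltaP_exponent_zero_lt hδ] with g hg z hz
  rw [dist_comm, dist_eq_norm]
  exact (norm_le_of_circMeanR_re_le (g.2.1.sub f.2.1) (by simp [f.2.2.1, g.2.2.1]) hp.1 hp.2.le hδ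
    (fun s hs => (g.circMeanR_re_sub_le_deltaP f hp hs).trans hg.le) hr
    (mem_closedBall_zero_iff.1 hz)).trans_lt hδε

lemma continuous_circMeanR_im (hq : 0 ≤ q) (hr : r ∈ Ioo (0 : ℝ) 1) :
    Continuous fun f : HarmV => circMeanR q (fun z => (f.1 z).im) r := by
  refine continuous_iff_continuousAt.2 fun f => ?_
  have hsub := sphere_subset_unitBall hr
  have hball : sphere (0 : ℂ) |r| ⊆ closedBall 0 r := by
    rw [abs_of_pos hr.1]
    exact sphere_subset_closedBall
  exact tendsto_circMeanR hq (.of_forall fun g => g.continuousOn_im.mono hsub)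
    (f.continuousOn_im.mono hsub)
    (uniformContinuous_im.comp_tendstoUniformlyOn
      ((f.tendstoUniformlyOn_nhds hr.2).mono hball))

/-- The set `ℒ` of those `f = u + i ũ` whose imaginary part `ũ` lies in no class `h^q`, `q > 0`. -/
def conjNoHardy : Set HarmV := {f | ∀ q > 0, ¬ MemHardy q fun z => (f.1 z).im}

lemma isGδ_conjNoHardy : IsGδ conjNoHardy := by
  have hcompl : conjNoHardy = {f : HarmV | ∃ q > 0, MemHardy q fun z => (f.1 z).im}ᶜ := by
    ext f
    simp [conjNoHardy]
  rw [hcompl, setOf_exists_memHardy_eq_iUnion continuousOn_im]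
  simp only [compl_iUnion]
  exact .iInter fun m => .iInter fun k => IsOpen.isGδ <| isOpen_compl_iff.2 <|
    isClosed_setOf_forall_circMeanR_le
      (fun r hr => continuous_circMeanR_im Nat.one_div_pos_of_nat.le hr) k

/-- The perturbation `f + t h` of `f`, for real `t`. -/
def addSMul (t : ℝ) : HarmV :=
  ⟨fun z => f.1 z + t * h.1 z, f.2.1.add (h.2.1.const_mul _), by simp [f.2.2.1, h.2.2.1],
    fun p hp => by
      simp only [add_re, re_ofReal_mul]
      exact (f.memHardy_re hp).add hp.1.le hp.2.le f.continuousOn_re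
        (continuousOn_const.mul h.continuousOn_re) ((h.memHardy_re hp).const_mul t)⟩

lemma deltaP_addSMul_le {C : ℝ} (hC : ∀ r ∈ Ioo (0 : ℝ) 1, circMeanR p (fun z => (h.1 z).re) r ≤ C)
    (t : ℝ) : deltaP p (f.addSMul h t).1 f.1 ≤ |t| ^ p * C := by
  have : Nonempty (Ioo (0 : ℝ) 1) := nonempty_Ioo_subtype one_pos
  refine ciSup_le fun r => ?_
  simp only [addSMul, add_sub_cancel_left, re_ofReal_mul]
  rw [circMeanR_const_mul]
  exact mul_le_mul_of_nonneg_left (hC r r.2) (by positivity)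

lemma tendsto_addSMul : Tendsto (f.addSMul h) (𝓝 0) (𝓝 f) := by
  rw [tendsto_iff_dist_tendsto_zero]
  have hterm : ∀ n, Tendsto (fun t => distTerm (f.addSMul h t) f n) (𝓝 0) (𝓝 0) := fun n => by
    have hp := exponent_mem_Ioo n
    obtain ⟨C, hC⟩ := h.memHardy_re hp
    have hcont : Continuous fun t : ℝ => |t| ^ exponent n * C :=
      (continuous_abs.rpow_const fun _ => Or.inr hp.1.le).mul continuous_const
    have hlim : Tendsto (fun t : ℝ => |t| ^ exponent n * C) (𝓝 0) (𝓝 0) := by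
      simpa [Real.zero_rpow hp.1.ne'] using hcont.tendsto 0
    exact squeeze_zero (fun t => distTerm_nonneg _ _ n)
      (fun t => (distTerm_le_deltaP _ _ n).trans (f.deltaP_addSMul_le h hC t)) hlim
  have hsum := tendsto_tsum_of_dominated_convergence summable_half_pow_succ hterm
    (.of_forall fun t n => by
      rw [Real.norm_of_nonneg (distTerm_nonneg _ _ n)]
      exact distTerm_le_half_pow _ _ n)
  rwa [tsum_zero] at hsum

variable {f h} in
lemma addSMul_mem_conjNoHardy (hf : f ∉ conjNoHardy) (hh : h ∈ conjNoHardy) {t : ℝ} (ht : t ≠ 0) :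
    f.addSMul h t ∈ conjNoHardy := by
  intro q' hq' hmem'
  simp only [conjNoHardy, mem_ofPred_eq, not_forall, not_not] at hf
  obtain ⟨q, hq, hmem⟩ := hf
  set s := min (min q q') 1
  have hs : 0 < s := lt_min (lt_min hq hq') one_pos
  have hsq : s ≤ q := (min_le_left _ _).trans (min_le_left _ _)
  have hsq' : s ≤ q' := (min_le_left _ _).trans (min_le_right _ _)
  have hdiff := (hmem'.mono_exponent hs.le hsq' (f.addSMul h t).continuousOn_im).sub hs.le
    (min_le_right _ _) (f.addSMul h t).continuousOn_im f.continuousOn_im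
    (hmem.mono_exponent hs.le hsq f.continuousOn_im)
  refine hh s hs ?_
  convert hdiff.const_mul t⁻¹ using 2 with z
  simp [addSMul, inv_mul_cancel_left₀ ht]

lemma dense_conjNoHardy (hne : conjNoHardy.Nonempty) : Dense conjNoHardy := by
  obtain ⟨h, hh⟩ := hne
  intro f
  by_cases hf : f ∈ conjNoHardy
  · exact subset_closure hf
  refine mem_closure_of_tendsto ((f.tendsto_addSMul h).mono_left
    (nhdsWithin_le_nhds (s := {0}ᶜ))) ?_
  filter_upwards [self_mem_nhdsWithin] with t ht
  exact addSMul_mem_conjNoHardy hf hh ht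

end HarmV

/-! ### A Poisson-type kernel -/

/-- The kernel `(1 - |w|) / |1 - w|²`, which is the Poisson kernel of the unit disc with pole `1`
up to a factor between `1` and `2`. -/
def diskKernel (w : ℂ) : ℝ := (1 - ‖w‖) / ‖1 - w‖ ^ 2

section DiskKernel

variable {p R τ : ℝ}

lemma norm_one_sub_circleMap_sq (R τ : ℝ) :
    ‖1 - circleMap 0 R τ‖ ^ 2 = 1 - 2 * R * Real.cos τ + R ^ 2 := by
  have hre : (circleMap 0 R τ).re = R * Real.cos τ := by simp [circleMap, exp_ofReal_mul_I_re]
  have him : (circleMap 0 R τ).im = R * Real.sin τ := by simp [circleMap, exp_ofReal_mul_I_im]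
  rw [← normSq_eq_norm_sq, normSq_apply]
  simp only [sub_re, sub_im, one_re, one_im, hre, him]
  linear_combination R ^ 2 * Real.sin_sq_add_cos_sq τ

lemma abs_div_pi_le_norm_one_sub_circleMap (hR : 0 ≤ R) (hτ : |τ| ≤ Real.pi) :
    |τ| / Real.pi ≤ ‖1 - circleMap 0 R τ‖ := by
  refine le_of_sq_le_sq ?_ (norm_nonneg _)
  rw [norm_one_sub_circleMap_sq]
  have hsmall : |τ| / Real.pi ≤ 1 := (div_le_one Real.pi_pos).2 hτ
  have hnonneg : 0 ≤ |τ| / Real.pi := by positivity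
  have hcos : Real.cos τ ≤ 1 - 2 * (|τ| / Real.pi) ^ 2 := by
    refine (Real.cos_le_one_sub_mul_cos_sq hτ).trans_eq ?_
    rw [div_pow, sq_abs]
    ring
  generalize |τ| / Real.pi = y at *
  have hRcos : R * Real.cos τ ≤ R * (1 - 2 * y ^ 2) := by gcongr
  have hy : y ^ 2 ≤ 1 := pow_le_one₀ hnonneg hsmall
  nlinarith [mul_nonneg (sq_nonneg (1 - R)) (sub_nonneg.2 hy), mul_nonneg hR (sq_nonneg y),
    mul_nonneg (sq_nonneg R) (sq_nonneg y)]

lemma continuousOn_diskKernel : ContinuousOn diskKernel (ball 0 1) := by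
  refine ContinuousOn.div (by fun_prop) (by fun_prop) fun w hw => ?_
  rw [mem_ball_zero_iff] at hw
  refine pow_ne_zero 2 (norm_ne_zero_iff.2 (sub_ne_zero.2 ?_))
  rintro rfl
  simp at hw

-- Splitting `|1 - w|² = |1 - w|^p |1 - w|^(2 - p)` makes the exponent of `|τ|` integrable,
-- since `p * (2 - p) < 1`, and leaves a positive power of `1 - R`.
lemma diskKernel_circleMap_rpow_le (hp : p ∈ Ioo (0 : ℝ) 1) (hR : R ∈ Ioo (0 : ℝ) 1)
    (hτ : |τ| ≤ Real.pi) (hτ0 : τ ≠ 0) :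
    |diskKernel (circleMap 0 R τ)| ^ p ≤
      (1 - R) ^ (p * (1 - p)) * (|τ| / Real.pi) ^ (-(p * (2 - p))) := by
  have hgap : 0 < 1 - R := sub_pos.2 hR.2
  have hangle : 0 < |τ| / Real.pi := div_pos (abs_pos.2 hτ0) Real.pi_pos
  have hle_gap : 1 - R ≤ ‖1 - circleMap 0 R τ‖ := by
    simpa [abs_of_pos hR.1] using norm_sub_norm_le (1 : ℂ) (circleMap 0 R τ)
  have hle_angle := abs_div_pi_le_norm_one_sub_circleMap hR.1.le hτ
  rw [diskKernel, norm_circleMap_zero, abs_of_pos hR.1, abs_of_nonneg (by positivity)]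
  generalize ‖1 - circleMap 0 R τ‖ = E at *
  generalize 1 - R = x at *
  generalize |τ| / Real.pi = y at *
  have hE : 0 < E := hgap.trans_le hle_gap
  have hsplit : x ^ p * y ^ (2 - p) ≤ E ^ 2 := calc
    x ^ p * y ^ (2 - p) ≤ E ^ p * E ^ (2 - p) :=
      mul_le_mul (Real.rpow_le_rpow hgap.le hle_gap hp.1.le)
        (Real.rpow_le_rpow hangle.le hle_angle (by linarith [hp.2])) (by positivity) (by positivity)
    _ = E ^ 2 := by rw [← Real.rpow_add hE, add_sub_cancel, Real.rpow_two]
  calc (x / E ^ 2) ^ p ≤ (x / (x ^ p * y ^ (2 - p))) ^ p :=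
      Real.rpow_le_rpow (by positivity) (by gcongr) hp.1.le
    _ = (x ^ (1 - p) * y ^ (-(2 - p))) ^ p := by
      rw [Real.rpow_neg hangle.le, Real.rpow_sub hgap, Real.rpow_one]
      field_simp
    _ = x ^ (p * (1 - p)) * y ^ (-(p * (2 - p))) := by
      rw [Real.mul_rpow (by positivity) (by positivity), ← Real.rpow_mul hgap.le,
        ← Real.rpow_mul hangle.le]
      ring_nf

lemma intervalIntegrable_abs_div_rpow {b s : ℝ} (hb : 0 < b) (hs : -1 < s) :
    IntervalIntegrable (fun τ : ℝ => (|τ| / b) ^ s) volume (-b) b := by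
  have hright : IntervalIntegrable (fun τ : ℝ => (|τ| / b) ^ s) volume 0 b := by
    refine ((intervalIntegral.intervalIntegrable_rpow' hs).div_const (b ^ s)).congr fun τ hτ => ?_
    rw [uIoc_of_le hb.le] at hτ
    exact (abs_of_pos hτ.1).symm ▸ (Real.div_rpow hτ.1.le hb.le s).symm
  have hleft := ((IntervalIntegrable.iff_comp_neg
    (f := fun τ : ℝ => (|τ| / b) ^ s)).1 hright).symm
  simp only [abs_neg, neg_zero] at hleft
  exact hleft.trans hright

lemma exists_circMeanR_diskKernel_le (hp : p ∈ Ioo (0 : ℝ) 1) :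
    ∃ K : ℝ, 0 ≤ K ∧ ∀ R ∈ Ioo (0 : ℝ) 1,
      circMeanR p diskKernel R ≤ K * (1 - R) ^ (p * (1 - p)) := by
  have hpi : -Real.pi ≤ Real.pi := by linarith [Real.pi_pos]
  let I := ∫ τ in (-Real.pi)..Real.pi, (|τ| / Real.pi) ^ (-(p * (2 - p)))
  have hI : 0 ≤ I := intervalIntegral.integral_nonneg hpi fun τ _ => by positivity
  refine ⟨1 / (2 * Real.pi) * I, by positivity, fun R hR => ?_⟩
  have hexp : -1 < -(p * (2 - p)) := by nlinarith [mul_pos (sub_pos.2 hp.2) (sub_pos.2 hp.2)]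
  have hcont : Continuous fun τ => |diskKernel (circleMap 0 R τ)| ^ p :=
    ((continuousOn_diskKernel.mono (sphere_subset_unitBall hR)).comp_continuous
      (continuous_circleMap 0 R) (circleMap_mem_sphere' 0 R)).abs.rpow_const fun _ => Or.inr hp.1.le
  have hne : ∀ᵐ τ : ℝ ∂volume.restrict (Icc (-Real.pi) Real.pi), τ ≠ 0 :=
    ae_restrict_of_ae (Measure.ae_ne _ 0)
  have hint : ∫ τ in (-Real.pi)..Real.pi, |diskKernel (circleMap 0 R τ)| ^ p ≤
      (1 - R) ^ (p * (1 - p)) * I := by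
    rw [← intervalIntegral.integral_const_mul]
    refine intervalIntegral.integral_mono_ae_restrict hpi (hcont.intervalIntegrable _ _)
      ((intervalIntegrable_abs_div_rpow Real.pi_pos hexp).const_mul _) ?_
    filter_upwards [hne, ae_restrict_mem measurableSet_Icc] with τ hτ0 hτ
    exact diskKernel_circleMap_rpow_le hp hR (abs_le.2 hτ) hτ0
  simp only [circleMap_zero] at hint
  calc circMeanR p diskKernel R ≤ 1 / (2 * Real.pi) * ((1 - R) ^ (p * (1 - p)) * I) :=
      mul_le_mul_of_nonneg_left hint (by positivity)
    _ = 1 / (2 * Real.pi) * I * (1 - R) ^ (p * (1 - p)) := by ring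

end DiskKernel

/-! ### The building block `z / (1 - z²)` -/

/-- The function `z / (1 - z²)`, which maps the unit disc conformally onto the plane slit along two
rays of the imaginary axis. Its real part lies in `h^p` for every `p < 1`. -/
def block (z : ℂ) : ℂ := z / (1 - z ^ 2)

section Block

variable {p r : ℝ} {z : ℂ}

lemma one_sub_sq_ne_zero (hz : ‖z‖ < 1) : 1 - z ^ 2 ≠ 0 := by
  refine sub_ne_zero.2 fun h => ?_
  have hnorm : ‖z‖ ^ 2 = 1 := by rw [← norm_pow, ← h, norm_one]
  exact (pow_lt_one₀ (norm_nonneg z) hz two_ne_zero).ne hnorm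

lemma differentiableOn_block : DifferentiableOn ℂ block (ball 0 1) :=
  DifferentiableOn.div (by fun_prop) (by fun_prop) fun _ hz =>
    one_sub_sq_ne_zero (mem_ball_zero_iff.1 hz)

lemma norm_block_le (hz : ‖z‖ ≤ r) (hr : r < 1) : ‖block z‖ ≤ ‖z‖ / (1 - r) := by
  have hden : 1 - r ≤ ‖1 - z ^ 2‖ := by
    have := norm_sub_norm_le (1 : ℂ) (z ^ 2)
    rw [norm_one, norm_pow] at this
    nlinarith [norm_nonneg z]
  rw [block, norm_div]
  exact div_le_div_of_nonneg_left (norm_nonneg z) (sub_pos.2 hr) hden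

lemma half_norm_le_norm_block (hz : ‖z‖ < 1) : ‖z‖ / 2 ≤ ‖block z‖ := by
  have hden : ‖1 - z ^ 2‖ ≤ 2 := by
    have := norm_sub_le (1 : ℂ) (z ^ 2)
    rw [norm_one, norm_pow] at this
    nlinarith [norm_nonneg z]
  have hpos : 0 < ‖1 - z ^ 2‖ := norm_pos_iff.2 (one_sub_sq_ne_zero hz)
  rw [block, norm_div]
  gcongr

lemma re_block (z : ℂ) : (block z).re = z.re * diskKernel (z ^ 2) := by
  rw [block, diskKernel, div_re, ← normSq_eq_norm_sq, norm_pow, ← normSq_eq_norm_sq, ← add_div,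
    ← mul_div_assoc, normSq_apply z]
  congr 1
  simp [pow_two]
  ring

lemma exists_circMeanR_re_block_le (hp : p ∈ Ioo (0 : ℝ) 1) :
    ∃ K : ℝ, 0 ≤ K ∧ ∀ r ∈ Ioo (0 : ℝ) 1, circMeanR p (fun z => (block z).re) r ≤
      K * (r ^ p * (1 - r ^ 2) ^ (p * (1 - p))) := by
  obtain ⟨K, hK0, hK⟩ := exists_circMeanR_diskKernel_le hp
  refine ⟨K, hK0, fun r hr => ?_⟩
  have hr2 : r ^ 2 ∈ Ioo (0 : ℝ) 1 := ⟨pow_pos hr.1 2, pow_lt_one₀ hr.1.le hr.2 two_ne_zero⟩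
  have hkernel := continuousOn_diskKernel.mono (sphere_subset_unitBall hr2)
  have hmaps : MapsTo (fun z : ℂ => z ^ 2) (sphere 0 |r|) (sphere 0 |r ^ 2|) := fun z hz => by
    simp only [mem_sphere_zero_iff_norm, norm_pow, abs_pow] at hz ⊢
    rw [hz]
  calc circMeanR p (fun z => (block z).re) r
      ≤ circMeanR p (fun z => r * diskKernel (z ^ 2)) r := by
        refine circMeanR_mono hp.1.le (continuous_re.comp_continuousOn
          (differentiableOn_block.continuousOn.mono (sphere_subset_unitBall hr)))
          (continuousOn_const.mul (hkernel.comp (by fun_prop) hmaps)) fun z hz => ?_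
        rw [re_block, abs_mul, abs_mul, ← mem_sphere_zero_iff_norm.1 hz]
        exact mul_le_mul_of_nonneg_right (abs_re_le_norm z) (abs_nonneg _)
    _ = r ^ p * circMeanR p diskKernel (r ^ 2) := by
        rw [circMeanR_const_mul, circMeanR_comp_pow two_ne_zero hp.1.le hkernel, abs_of_pos hr.1]
    _ ≤ r ^ p * (K * (1 - r ^ 2) ^ (p * (1 - p))) :=
        mul_le_mul_of_nonneg_left (hK _ hr2) (Real.rpow_nonneg hr.1.le p)
    _ = K * (r ^ p * (1 - r ^ 2) ^ (p * (1 - p))) := mul_left_comm _ _ _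

end Block

/-! ### A telescoping estimate -/

lemma two_rpow_sub_one_mul_le {β x : ℝ} (hβ : 0 ≤ β) (hβ1 : β ≤ 1) (hx : 0 ≤ x) (hx1 : x ≤ 1) :
    (2 ^ β - 1) * (x * (1 - x) ^ β) ≤ (1 - x ^ 2) ^ β - (1 - x) ^ β := by
  have hfactor : (1 - x ^ 2) ^ β = (1 - x) ^ β * (1 + x) ^ β := by
    rw [← Real.mul_rpow (by linarith) (by linarith)]
    ring_nf
  have hconcave := (Real.concaveOn_rpow hβ hβ1).2 (x := 1) (y := 2) (by simp) (by simp)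
    (sub_nonneg.2 hx1) hx (sub_add_cancel 1 x)
  simp only [smul_eq_mul, Real.one_rpow, mul_one] at hconcave
  rw [show 1 - x + x * 2 = 1 + x by ring] at hconcave
  rw [hfactor]
  nlinarith [mul_le_mul_of_nonneg_left hconcave (Real.rpow_nonneg (sub_nonneg.2 hx1) β)]

lemma sum_pow_two_pow_mul_le {β y : ℝ} (hβ : 0 < β) (hβ1 : β ≤ 1) (hy : 0 ≤ y) (hy1 : y ≤ 1)
    (N : ℕ) :
    ∑ n ∈ Finset.range N, y ^ 2 ^ n * (1 - y ^ 2 ^ n) ^ β ≤ (2 ^ β - 1)⁻¹ := by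
  have hpos : 0 < (2 : ℝ) ^ β - 1 := sub_pos.2 (Real.one_lt_rpow one_lt_two hβ)
  have hle_one : ∀ n, y ^ 2 ^ n ≤ 1 := fun n => pow_le_one₀ hy hy1
  let g : ℕ → ℝ := fun n => (1 - y ^ 2 ^ n) ^ β
  rw [← one_div, le_div_iff₀' hpos, Finset.mul_sum]
  calc ∑ n ∈ Finset.range N, (2 ^ β - 1) * (y ^ 2 ^ n * (1 - y ^ 2 ^ n) ^ β)
      ≤ ∑ n ∈ Finset.range N, (g (n + 1) - g n) := by
        refine Finset.sum_le_sum fun n _ => ?_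
        simp only [g, pow_succ 2, pow_mul]
        exact two_rpow_sub_one_mul_le hβ.le hβ1 (by positivity) (hle_one n)
    _ = g N - g 0 := Finset.sum_range_sub g N
    _ ≤ g N := sub_le_self _ (Real.rpow_nonneg (sub_nonneg.2 (hle_one 0)) β)
    _ ≤ 1 := Real.rpow_le_one (sub_nonneg.2 (hle_one N)) (sub_le_self _ (by positivity)) hβ.le

lemma one_sub_sq_le_two_div_mul {p x : ℝ} (hp : 0 < p) (hp1 : p ≤ 1) (hx : 0 ≤ x) :
    1 - x ^ 2 ≤ 2 / p * (1 - x ^ p) := by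
  have hbernoulli := one_add_mul_self_le_rpow_one_add (s := x ^ p - 1) (p := 1 / p)
    (by linarith [Real.rpow_nonneg hx p]) ((one_le_div hp).2 hp1)
  rw [add_sub_cancel, ← Real.rpow_mul hx, mul_one_div_cancel hp.ne', Real.rpow_one] at hbernoulli
  calc 1 - x ^ 2 ≤ 2 * (1 - x) := by nlinarith [sq_nonneg (1 - x)]
    _ ≤ 2 * (1 / p * (1 - x ^ p)) := by linarith
    _ = 2 / p * (1 - x ^ p) := by ring

lemma exists_sum_pow_two_pow_rpow_le {p β : ℝ} (hp : 0 < p) (hp1 : p ≤ 1) (hβ : 0 < β)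
    (hβ1 : β ≤ 1) :
    ∃ C : ℝ, ∀ (N : ℕ), ∀ r ∈ Icc (0 : ℝ) 1,
      ∑ n ∈ Finset.range N, (r ^ 2 ^ n) ^ p * (1 - (r ^ 2 ^ n) ^ 2) ^ β ≤ C := by
  refine ⟨(2 / p) ^ β * (2 ^ β - 1)⁻¹, fun N r ⟨hr0, hr1⟩ => ?_⟩
  have hrp : r ^ p ≤ 1 := Real.rpow_le_one hr0 hr1 hp.le
  have hrp0 : 0 ≤ r ^ p := Real.rpow_nonneg hr0 p
  refine le_trans ?_ (mul_le_mul_of_nonneg_left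
    (sum_pow_two_pow_mul_le hβ hβ1 hrp0 hrp N) (by positivity))
  rw [Finset.mul_sum]
  refine Finset.sum_le_sum fun n _ => ?_
  have hpow : (r ^ 2 ^ n) ^ p = (r ^ p) ^ 2 ^ n := Real.rpow_pow_comm hr0 p (2 ^ n) |>.symm
  have hgap := one_sub_sq_le_two_div_mul hp hp1 (pow_nonneg hr0 (2 ^ n))
  have hgap0 : 0 ≤ 1 - (r ^ 2 ^ n) ^ 2 :=
    sub_nonneg.2 (pow_le_one₀ (by positivity) (pow_le_one₀ hr0 hr1))
  rw [hpow] at hgap ⊢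
  calc (r ^ p) ^ 2 ^ n * (1 - (r ^ 2 ^ n) ^ 2) ^ β
      ≤ (r ^ p) ^ 2 ^ n * (2 / p * (1 - (r ^ p) ^ 2 ^ n)) ^ β := by gcongr
    _ = (2 / p) ^ β * ((r ^ p) ^ 2 ^ n * (1 - (r ^ p) ^ 2 ^ n) ^ β) := by
      rw [Real.mul_rpow (by positivity) (sub_nonneg.2 (pow_le_one₀ hrp0 hrp))]
      ring

/-! ### Lacunary series of blocks -/

open scoped BoundedContinuousFunction

/-- The series `∑ aₙ block (z ^ 2ⁿ)`, for a bounded real sequence `a`. The type `ℕ →ᵇ ℝ` of bounded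
functions on the discrete space `ℕ` encodes the Banach space `ℓ^∞`. -/
def lacunarySum (a : ℕ →ᵇ ℝ) (z : ℂ) : ℂ := ∑' n, (a n : ℂ) * block (z ^ 2 ^ n)

section LacunarySum

variable {p q r : ℝ} {z : ℂ} (a b : ℕ →ᵇ ℝ)

lemma norm_lacunarySum_term_le (hz : ‖z‖ ≤ r) (hr : r < 1) (n : ℕ) :
    ‖(a n : ℂ) * block (z ^ 2 ^ n)‖ ≤ ‖a‖ * (r ^ n / (1 - r)) := by
  have hr0 : 0 ≤ r := (norm_nonneg z).trans hz
  have hgap : 0 ≤ 1 - r := (sub_pos.2 hr).le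
  have hpow : ‖z ^ 2 ^ n‖ ≤ r ^ 2 ^ n := by
    rw [norm_pow]
    gcongr
  have hle : ‖z ^ 2 ^ n‖ ≤ r := hpow.trans (pow_le_of_le_one hr0 hr.le (by positivity))
  have hle_pow : ‖z ^ 2 ^ n‖ ≤ r ^ n :=
    hpow.trans (pow_le_pow_of_le_one hr0 hr.le Nat.lt_two_pow_self.le)
  rw [norm_mul, norm_real]
  exact mul_le_mul (a.norm_coe_le_norm n)
    ((norm_block_le hle hr).trans (div_le_div_of_nonneg_right hle_pow hgap))
    (norm_nonneg _) (norm_nonneg _)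

lemma hasSum_lacunarySum_bound (A : ℝ) (hr0 : 0 ≤ r) (hr : r < 1) :
    HasSum (fun n : ℕ => A * (r ^ n / (1 - r))) (A * ((1 - r)⁻¹ / (1 - r))) :=
  ((hasSum_geometric_of_lt_one hr0 hr).div_const _).mul_left A

lemma summable_lacunarySum (hz : ‖z‖ < 1) : Summable fun n => (a n : ℂ) * block (z ^ 2 ^ n) :=
  .of_norm_bounded (hasSum_lacunarySum_bound ‖a‖ (norm_nonneg z) hz).summable
    (norm_lacunarySum_term_le a le_rfl hz)

lemma norm_lacunarySum_le (hz : ‖z‖ ≤ r) (hr : r < 1) :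
    ‖lacunarySum a z‖ ≤ ‖a‖ * ((1 - r)⁻¹ / (1 - r)) :=
  tsum_of_norm_bounded (hasSum_lacunarySum_bound ‖a‖ ((norm_nonneg z).trans hz) hr)
    (norm_lacunarySum_term_le a hz hr)

lemma lacunarySum_sub (hz : ‖z‖ < 1) :
    lacunarySum (a - b) z = lacunarySum a z - lacunarySum b z := by
  simp only [lacunarySum]
  rw [← (summable_lacunarySum a hz).tsum_sub (summable_lacunarySum b hz)]
  simp only [BoundedContinuousFunction.sub_apply, ofReal_sub, sub_mul]

lemma lacunarySum_smul (t : ℝ) (z : ℂ) : lacunarySum (t • a) z = t * lacunarySum a z := by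
  simp only [lacunarySum, ← tsum_mul_left, BoundedContinuousFunction.coe_smul, smul_eq_mul,
    ofReal_mul, mul_assoc]

lemma lacunarySum_apply_zero : lacunarySum a 0 = 0 := by
  simp [lacunarySum, block]

lemma differentiableOn_block_pow (n : ℕ) :
    DifferentiableOn ℂ (fun z => block (z ^ 2 ^ n)) (ball 0 1) := by
  refine differentiableOn_block.comp (by fun_prop) fun z hz => ?_
  simp only [mem_ball_zero_iff, norm_pow] at hz ⊢
  exact pow_lt_one₀ (norm_nonneg z) hz (by positivity)

lemma differentiableOn_lacunarySum : DifferentiableOn ℂ (lacunarySum a) (ball 0 1) := by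
  intro z hz
  obtain ⟨r, hzr, hr⟩ := exists_between (mem_ball_zero_iff.1 hz)
  have hdiff : DifferentiableOn ℂ (lacunarySum a) (ball 0 r) :=
    differentiableOn_tsum_of_summable_norm
      (hasSum_lacunarySum_bound ‖a‖ ((norm_nonneg z).trans hzr.le) hr).summable
      (fun n => ((differentiableOn_block_pow n).mono (ball_subset_ball hr.le)).const_mul _)
      isOpen_ball fun n w hw => norm_lacunarySum_term_le a (mem_ball_zero_iff.1 hw).le hr n
  exact (hdiff.differentiableAt
    (isOpen_ball.mem_nhds (mem_ball_zero_iff.2 hzr))).differentiableWithinAt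

lemma continuousOn_re_block_pow (n : ℕ) :
    ContinuousOn (fun z => (block (z ^ 2 ^ n)).re) (ball 0 1) :=
  continuous_re.comp_continuousOn (differentiableOn_block_pow n).continuousOn

lemma circMeanR_re_partialSum_le {K : ℝ} (hp : p ∈ Ioo (0 : ℝ) 1)
    (hK : ∀ r ∈ Ioo (0 : ℝ) 1, circMeanR p (fun z => (block z).re) r ≤
      K * (r ^ p * (1 - r ^ 2) ^ (p * (1 - p))))
    (hr : r ∈ Ioo (0 : ℝ) 1) (N : ℕ) :
    circMeanR p (fun z => ∑ n ∈ Finset.range N, a n * (block (z ^ 2 ^ n)).re) r ≤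
      ‖a‖ ^ p * (K * ∑ n ∈ Finset.range N,
        (r ^ 2 ^ n) ^ p * (1 - (r ^ 2 ^ n) ^ 2) ^ (p * (1 - p))) := by
  have hsub := sphere_subset_unitBall hr
  refine (circMeanR_sum_le (f := fun n z => a n * (block (z ^ 2 ^ n)).re) _ hp.1 hp.2.le
    fun n _ => continuousOn_const.mul ((continuousOn_re_block_pow n).mono hsub)).trans ?_
  rw [Finset.mul_sum, Finset.mul_sum]
  refine Finset.sum_le_sum fun n _ => ?_
  have hrn : r ^ 2 ^ n ∈ Ioo (0 : ℝ) 1 :=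
    ⟨pow_pos hr.1 _, pow_lt_one₀ hr.1.le hr.2 (by positivity)⟩
  have hblock : ContinuousOn (fun z => (block z).re) (sphere 0 |r ^ 2 ^ n|) :=
    continuous_re.comp_continuousOn
      (differentiableOn_block.continuousOn.mono (sphere_subset_unitBall hrn))
  rw [circMeanR_const_mul, circMeanR_comp_pow (by positivity) hp.1.le hblock]
  exact mul_le_mul (Real.rpow_le_rpow (abs_nonneg _) (a.norm_coe_le_norm n) hp.1.le) (hK _ hrn)
    (circMeanR_nonneg _ _ _) (by positivity)

lemma tendstoUniformlyOn_re_partialSum (hr : r ∈ Ioo (0 : ℝ) 1) :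
    TendstoUniformlyOn (fun N z => ∑ n ∈ Finset.range N, a n * (block (z ^ 2 ^ n)).re)
      (fun z => (lacunarySum a z).re) atTop (sphere 0 |r|) := by
  have hlim := tendstoUniformlyOn_tsum_nat (s := sphere (0 : ℂ) |r|)
    (f := fun n z => (a n : ℂ) * block (z ^ 2 ^ n))
    (hasSum_lacunarySum_bound ‖a‖ hr.1.le hr.2).summable fun n z hz =>
      norm_lacunarySum_term_le a (mem_sphere_zero_iff_norm.1 hz ▸ (abs_of_pos hr.1).le) hr.2 n
  simpa [Function.comp_def, lacunarySum] using reCLM.uniformContinuous.comp_tendstoUniformlyOn hlim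

lemma memHardy_re_lacunarySum (hp : p ∈ Ioo (0 : ℝ) 1) :
    MemHardy p fun z => (lacunarySum a z).re := by
  have hβ : 0 < p * (1 - p) := mul_pos hp.1 (sub_pos.2 hp.2)
  obtain ⟨K, hK0, hK⟩ := exists_circMeanR_re_block_le hp
  obtain ⟨C, hC⟩ := exists_sum_pow_two_pow_rpow_le hp.1 hp.2.le hβ (by nlinarith [hp.1, hp.2])
  refine ⟨‖a‖ ^ p * (K * C), fun r hr => ?_⟩
  have hsub := sphere_subset_unitBall hr
  have hlim := tendsto_circMeanR hp.1.le
    (.of_forall fun N => continuousOn_finsetSum (Finset.range N) fun n _ =>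
      continuousOn_const.mul ((continuousOn_re_block_pow n).mono hsub))
    (continuous_re.comp_continuousOn ((differentiableOn_lacunarySum a).continuousOn.mono hsub))
    (tendstoUniformlyOn_re_partialSum a hr)
  refine le_of_tendsto' hlim fun N => (circMeanR_re_partialSum_le a hp hK hr N).trans ?_
  have hsum := hC N r ⟨hr.1.le, hr.2.le⟩
  gcongr

end LacunarySum

/-! ### Khinchin's inequality for random signs -/

/-- The signed sum `∑ ±cᵢ` over `i ∈ s`, with sign `+` on `S` and `-` off `S`. Random signs are
modelled by letting `S` range over all subsets of `s`. -/
def signedSum {ι E : Type*} [DecidableEq ι] [AddCommGroup E] (s : Finset ι) (c : ι → E)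
    (S : Finset ι) : E :=
  ∑ i ∈ s, if i ∈ S then c i else -c i

section Khinchin

variable {ι E : Type*} [DecidableEq ι] [NormedAddCommGroup E]

lemma sum_powerset_insert_signedSum {s : Finset ι} {j : ι} (hj : j ∉ s) (c : ι → E) (g : E → ℝ) :
    ∑ S ∈ (insert j s).powerset, g (signedSum (insert j s) c S) =
      ∑ S ∈ s.powerset, (g (signedSum s c S - c j) + g (signedSum s c S + c j)) := by
  rw [Finset.sum_powerset_insert hj, ← Finset.sum_add_distrib]
  refine Finset.sum_congr rfl fun S hS => ?_
  have hjS : j ∉ S := fun h => hj (Finset.mem_powerset.1 hS h)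
  have hminus : signedSum (insert j s) c S = signedSum s c S - c j := by
    rw [signedSum, Finset.sum_insert hj, if_neg hjS, neg_add_eq_sub, signedSum]
  have hplus : signedSum (insert j s) c (insert j S) = signedSum s c S + c j := by
    rw [signedSum, Finset.sum_insert hj, if_pos (Finset.mem_insert_self j S), add_comm, signedSum]
    refine congrArg (· + c j) (Finset.sum_congr rfl fun i hi => ?_)
    simp only [Finset.mem_insert, ne_of_mem_of_not_mem hi hj, false_or]
  rw [hminus, hplus]

variable [InnerProductSpace ℝ E]

lemma norm_sub_pow_four_add_norm_add_pow_four_le (x a : E) :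
    ‖x - a‖ ^ 4 + ‖x + a‖ ^ 4 ≤ 2 * ‖x‖ ^ 4 + 12 * ‖x‖ ^ 2 * ‖a‖ ^ 2 + 2 * ‖a‖ ^ 4 := by
  have hinner : inner ℝ x a ^ 2 ≤ (‖x‖ * ‖a‖) ^ 2 :=
    sq_le_sq' (neg_le_of_abs_le (abs_real_inner_le_norm x a)) (real_inner_le_norm x a)
  rw [show ‖x - a‖ ^ 4 = (‖x - a‖ ^ 2) ^ 2 by ring, show ‖x + a‖ ^ 4 = (‖x + a‖ ^ 2) ^ 2 by ring,
    norm_sub_sq_real, norm_add_sq_real]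
  nlinarith

lemma sum_norm_signedSum_sq (s : Finset ι) (c : ι → E) :
    ∑ S ∈ s.powerset, ‖signedSum s c S‖ ^ 2 = 2 ^ s.card * ∑ i ∈ s, ‖c i‖ ^ 2 := by
  induction s using Finset.induction_on with
  | empty => simp [signedSum]
  | insert j s hj ih =>
    have hparallelogram (x : E) : ‖x - c j‖ ^ 2 + ‖x + c j‖ ^ 2 = 2 * ‖x‖ ^ 2 + 2 * ‖c j‖ ^ 2 := by
      rw [norm_sub_sq_real, norm_add_sq_real]
      ring
    rw [sum_powerset_insert_signedSum hj c (‖·‖ ^ 2)]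
    simp only [hparallelogram]
    rw [Finset.sum_add_distrib, ← Finset.mul_sum, ih, Finset.sum_const, Finset.card_powerset,
      Finset.sum_insert hj, Finset.card_insert_of_notMem hj, nsmul_eq_mul]
    push_cast
    ring

lemma sum_norm_signedSum_pow_four_le (s : Finset ι) (c : ι → E) :
    ∑ S ∈ s.powerset, ‖signedSum s c S‖ ^ 4 ≤ 3 * 2 ^ s.card * (∑ i ∈ s, ‖c i‖ ^ 2) ^ 2 := by
  induction s using Finset.induction_on with
  | empty => simp [signedSum]
  | insert j s hj ih =>
    rw [sum_powerset_insert_signedSum hj c (‖·‖ ^ 4)]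
    refine (Finset.sum_le_sum fun S _ =>
      norm_sub_pow_four_add_norm_add_pow_four_le (signedSum s c S) (c j)).trans ?_
    rw [Finset.sum_add_distrib, Finset.sum_add_distrib, ← Finset.mul_sum, ← Finset.sum_mul,
      ← Finset.mul_sum, sum_norm_signedSum_sq, Finset.sum_const, Finset.card_powerset,
      Finset.sum_insert hj, Finset.card_insert_of_notMem hj, nsmul_eq_mul, pow_succ (2 : ℝ)]
    push_cast
    have hfourth : 0 ≤ 2 ^ s.card * ‖c j‖ ^ 4 := by positivity
    nlinarith

lemma sq_sub_pow_four_le_rpow {x q : ℝ} (hx : 0 ≤ x) (hq : q ≤ 2) :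
    x ^ 2 - x ^ 4 ≤ x ^ q := by
  rcases le_total x 1 with hx1 | hx1
  · have hle : x ^ 2 ≤ x ^ q := by
      rw [← Real.rpow_two]
      exact Real.rpow_le_rpow_of_exponent_ge_of_imp hx hx1 hq fun _ h => absurd h two_ne_zero
    exact (sub_le_self _ (by positivity)).trans hle
  · have hle : x ^ 2 ≤ x ^ 4 := pow_le_pow_right₀ hx1 (by norm_num)
    linarith [Real.rpow_nonneg hx q]

-- With `R² = 6 ∑ ‖cᵢ‖²`, averaging `x² - x⁴ ≤ x^q` over `x = ‖signedSum s c S‖ / R` bounds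
-- the `q`-th moment from below by the second and fourth ones.
lemma le_sum_norm_signedSum_rpow (s : Finset ι) (c : ι → E) {q : ℝ} (hq : 0 < q) (hq2 : q ≤ 2) :
    2 ^ s.card * (√(6 * ∑ i ∈ s, ‖c i‖ ^ 2) ^ q / 12) ≤
      ∑ S ∈ s.powerset, ‖signedSum s c S‖ ^ q := by
  have hsecond := sum_norm_signedSum_sq s c
  have hfourth := sum_norm_signedSum_pow_four_le s c
  have hvariance : 0 ≤ ∑ i ∈ s, ‖c i‖ ^ 2 := by positivity
  rcases hvariance.eq_or_lt with hzero | hpos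
  · rw [← hzero, mul_zero, Real.sqrt_zero, Real.zero_rpow hq.ne', zero_div, mul_zero]
    positivity
  generalize ∑ i ∈ s, ‖c i‖ ^ 2 = A at *
  have hRpos : 0 < √(6 * A) := Real.sqrt_pos.2 (by positivity)
  have hRsq : √(6 * A) ^ 2 = 6 * A := Real.sq_sqrt (by positivity)
  generalize √(6 * A) = R at *
  have hpoint (S : Finset ι) : R ^ q * (‖signedSum s c S‖ ^ 2 / R ^ 2 -
      ‖signedSum s c S‖ ^ 4 / R ^ 4) ≤ ‖signedSum s c S‖ ^ q := by
    have h := sq_sub_pow_four_le_rpow (div_nonneg (norm_nonneg (signedSum s c S)) hRpos.le) hq2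
    rwa [div_pow, div_pow, Real.div_rpow (norm_nonneg _) hRpos.le,
      le_div_iff₀' (by positivity)] at h
  refine le_trans ?_ (Finset.sum_le_sum fun S _ => hpoint S)
  rw [← Finset.mul_sum, Finset.sum_sub_distrib, ← Finset.sum_div, ← Finset.sum_div, hsecond]
  have hmain : 2 ^ s.card * A / R ^ 2 = 2 ^ s.card / 6 := by
    rw [hRsq]
    field_simp
  have herror : (∑ S ∈ s.powerset, ‖signedSum s c S‖ ^ 4) / R ^ 4 ≤ 2 ^ s.card / 12 := by
    rw [div_le_iff₀ (by positivity), show R ^ 4 = (R ^ 2) ^ 2 by ring, hRsq]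
    linarith
  rw [mul_div_assoc', mul_comm _ (R ^ q), mul_div_assoc, hmain]
  exact mul_le_mul_of_nonneg_left (by linarith) (by positivity)

end Khinchin

/-! ### A lacunary series outside every Hardy class -/

/-- The sequence with entries `1` on `S` and `-1` off `S` at the indices below `J`, and `0` at the
others. -/
def signSeq (J : ℕ) (S : Finset ℕ) : ℕ →ᵇ ℝ :=
  .ofNormedAddCommGroupDiscrete (fun n => if n < J then if n ∈ S then 1 else -1 else 0) 1
    fun n => by split_ifs <;> simp

section UnboundedMeans

variable {q r : ℝ}

lemma norm_signSeq_le (J : ℕ) (S : Finset ℕ) : ‖signSeq J S‖ ≤ 1 :=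
  BoundedContinuousFunction.norm_ofNormedAddCommGroup_le _ zero_le_one fun n => by
    split_ifs <;> simp

lemma lacunarySum_signSeq (J : ℕ) (S : Finset ℕ) (z : ℂ) :
    lacunarySum (signSeq J S) z =
      signedSum (Finset.range J) (fun n => block (z ^ 2 ^ n)) S := by
  have hvanish : ∀ n ∉ Finset.range J, (signSeq J S n : ℂ) * block (z ^ 2 ^ n) = 0 := fun n hn => by
    simp [signSeq, Finset.mem_range.not.1 hn]
  rw [lacunarySum, tsum_eq_sum hvanish, signedSum]
  refine Finset.sum_congr rfl fun n hn => ?_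
  split_ifs with hS <;> simp [signSeq, Finset.mem_range.1 hn, hS]

lemma le_sum_norm_lacunarySum_signSeq_rpow (hq : 0 < q) (hq2 : q ≤ 2) (J : ℕ) {z : ℂ}
    (hz : ‖z‖ < 1) (hzJ : 1 / 2 ≤ ‖z‖ ^ 2 ^ J) :
    2 ^ J * (√(6 * (J * (1 / 4) ^ 2)) ^ q / 12) ≤
      ∑ S ∈ (Finset.range J).powerset, ‖lacunarySum (signSeq J S) z‖ ^ q := by
  have hblock : ∀ n ∈ Finset.range J, (1 / 4) ^ 2 ≤ ‖block (z ^ 2 ^ n)‖ ^ 2 := fun n hn => by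
    have hpow : ‖z‖ ^ 2 ^ J ≤ ‖z ^ 2 ^ n‖ := by
      rw [norm_pow]
      exact pow_le_pow_of_le_one (norm_nonneg z) hz.le
        (Nat.pow_le_pow_right two_pos (Finset.mem_range.1 hn).le)
    have hlt : ‖z ^ 2 ^ n‖ < 1 := by
      rw [norm_pow]
      exact pow_lt_one₀ (norm_nonneg z) hz (by positivity)
    exact pow_le_pow_left₀ (by norm_num) (by linarith [half_norm_le_norm_block hlt]) 2
  have hvariance : J * (1 / 4) ^ 2 ≤ ∑ n ∈ Finset.range J, ‖block (z ^ 2 ^ n)‖ ^ 2 := by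
    simpa using Finset.card_nsmul_le_sum _ _ _ hblock
  have hkhinchin :=
    le_sum_norm_signedSum_rpow (Finset.range J) (fun n => block (z ^ 2 ^ n)) hq hq2
  simp only [lacunarySum_signSeq]
  refine le_trans ?_ hkhinchin
  rw [Finset.card_range]
  gcongr

lemma continuousOn_norm_lacunarySum (a : ℕ →ᵇ ℝ) :
    ContinuousOn (fun z => ‖lacunarySum a z‖) (ball 0 1) :=
  (differentiableOn_lacunarySum a).continuousOn.norm

lemma exists_signSeq_le_circMeanR (hq : 0 < q) (hq2 : q ≤ 2) (J : ℕ) :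
    ∃ S, ∃ r ∈ Ioo (0 : ℝ) 1, √(6 * (J * (1 / 4) ^ 2)) ^ q / 12 ≤
      circMeanR q (fun z => ‖lacunarySum (signSeq J S) z‖) r := by
  let r : ℝ := (1 / 2 : ℝ) ^ ((2 ^ J : ℕ) : ℝ)⁻¹
  have hr : r ∈ Ioo (0 : ℝ) 1 :=
    ⟨by positivity, Real.rpow_lt_one (by norm_num) (by norm_num) (by positivity)⟩
  have hrJ : r ^ 2 ^ J = 1 / 2 := Real.rpow_inv_natCast_pow (by norm_num) (by positivity)
  have hint : ∀ S ∈ (Finset.range J).powerset,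
      CircleIntegrable (fun z => |‖lacunarySum (signSeq J S) z‖| ^ q) 0 r := fun S _ =>
    circleIntegrable_abs_rpow hq.le
      ((continuousOn_norm_lacunarySum _).mono (sphere_subset_unitBall hr))
  have hsum : 2 ^ J * (√(6 * (J * (1 / 4) ^ 2)) ^ q / 12) ≤
      ∑ S ∈ (Finset.range J).powerset,
        circMeanR q (fun z => ‖lacunarySum (signSeq J S) z‖) r := by
    simp only [circMeanR_eq_circleAverage]
    rw [← Real.circleAverage_fun_sum hint, ← Real.circleAverage_const (2 ^ J * _) (0 : ℂ) r]
    refine Real.circleAverage_mono (circleIntegrable_const _ _ _)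
      (CircleIntegrable.fun_sum _ hint) fun z hz => ?_
    rw [mem_sphere_zero_iff_norm, abs_of_pos hr.1] at hz
    simp only [abs_norm]
    exact le_sum_norm_lacunarySum_signSeq_rpow hq hq2 J (hz ▸ hr.2) (hz ▸ hrJ.ge)
  obtain ⟨S, -, hS⟩ := Finset.exists_le_of_sum_le
    (s := (Finset.range J).powerset) (f := fun _ => √(6 * (J * (1 / 4) ^ 2)) ^ q / 12)
    (Finset.powerset_nonempty _) (by simpa using hsum)
  exact ⟨S, r, hr, hS⟩

lemma exists_lt_circMeanR_lacunarySum (hq : 0 < q) (hq2 : q ≤ 2) (K : ℝ) :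
    ∃ a : ℕ →ᵇ ℝ, ‖a‖ ≤ 1 ∧ ∃ r ∈ Ioo (0 : ℝ) 1,
      K < circMeanR q (fun z => ‖lacunarySum a z‖) r := by
  have htop : Tendsto (fun J : ℕ => √(6 * (J * (1 / 4) ^ 2)) ^ q / 12) atTop atTop :=
    ((tendsto_rpow_atTop hq).comp <| Real.tendsto_sqrt_atTop.comp <|
      (tendsto_natCast_atTop_atTop.atTop_mul_const (by norm_num)).const_mul_atTop
        (by norm_num)).atTop_div_const (by norm_num)
  obtain ⟨J, hJ⟩ := (htop.eventually_gt_atTop K).exists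
  obtain ⟨S, r, hr, hS⟩ := exists_signSeq_le_circMeanR hq hq2 J
  exact ⟨signSeq J S, norm_signSeq_le J S, r, hr, hJ.trans_le hS⟩

lemma continuous_circMeanR_norm_lacunarySum (hq : 0 ≤ q) (hr : r ∈ Ioo (0 : ℝ) 1) :
    Continuous fun a => circMeanR q (fun z => ‖lacunarySum a z‖) r := by
  have hsub := sphere_subset_unitBall hr
  refine continuous_iff_continuousAt.2 fun a => tendsto_circMeanR hq
    (.of_forall fun b => (continuousOn_norm_lacunarySum b).mono hsub)
    ((continuousOn_norm_lacunarySum a).mono hsub) (Metric.tendstoUniformlyOn_iff.2 fun ε hε => ?_)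
  let k := (1 - r)⁻¹ / (1 - r)
  have hk : 0 < k := div_pos (inv_pos.2 (sub_pos.2 hr.2)) (sub_pos.2 hr.2)
  filter_upwards [Metric.ball_mem_nhds a (div_pos hε hk)] with b hb z hz
  rw [mem_ball, dist_comm, dist_eq_norm, lt_div_iff₀ hk] at hb
  rw [mem_sphere_zero_iff_norm, abs_of_pos hr.1] at hz
  calc dist ‖lacunarySum a z‖ ‖lacunarySum b z‖
      ≤ ‖lacunarySum a z - lacunarySum b z‖ := dist_norm_norm_le _ _
    _ = ‖lacunarySum (a - b) z‖ := by rw [lacunarySum_sub a b (hz ▸ hr.2)]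
    _ ≤ ‖a - b‖ * k := norm_lacunarySum_le _ hz.le hr.2
    _ < ε := hb

lemma interior_setOf_circMeanR_lacunarySum_le (hq : 0 < q) (hq1 : q ≤ 1) (C : ℝ) :
    interior {a : ℕ →ᵇ ℝ | ∀ r ∈ Ioo (0 : ℝ) 1,
      circMeanR q (fun z => ‖lacunarySum a z‖) r ≤ C} = ∅ := by
  refine eq_empty_iff_forall_notMem.2 fun a ha => ?_
  obtain ⟨ε, hε, hball⟩ := Metric.mem_nhds_iff.1 (mem_interior_iff_mem_nhds.1 ha)
  have ht : 0 < ε / 2 := half_pos hε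
  obtain ⟨b, hb, r, hr, hlarge⟩ :=
    exists_lt_circMeanR_lacunarySum hq (hq1.trans one_le_two) (2 * C / (ε / 2) ^ q)
  have hsub := sphere_subset_unitBall hr
  have hcont (c : ℕ →ᵇ ℝ) := (continuousOn_norm_lacunarySum c).mono hsub
  have hmem : a + (ε / 2) • b ∈ ball a ε := by
    rw [mem_ball_iff_norm, add_sub_cancel_left, norm_smul, Real.norm_of_nonneg ht.le]
    nlinarith
  have htriangle : ∀ z ∈ sphere (0 : ℂ) |r|, |ε / 2 * ‖lacunarySum b z‖| ≤
      |‖lacunarySum (a + (ε / 2) • b) z‖| + |‖lacunarySum a z‖| := fun z hz => by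
    have hdiff : lacunarySum (a + (ε / 2) • b) z - lacunarySum a z =
        ↑(ε / 2) * lacunarySum b z := by
      rw [← lacunarySum_sub _ _ (mem_ball_zero_iff.1 (hsub hz)), add_sub_cancel_left,
        lacunarySum_smul]
    have hnorm := norm_sub_le (lacunarySum (a + (ε / 2) • b) z) (lacunarySum a z)
    rw [hdiff, norm_mul, norm_real, Real.norm_of_nonneg ht.le] at hnorm
    rwa [abs_norm, abs_norm, abs_mul, abs_norm, abs_of_pos ht]
  have hsum : circMeanR q (fun z => ε / 2 * ‖lacunarySum b z‖) r ≤ C + C :=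
    (circMeanR_le_add hq.le hq1 (continuousOn_const.mul (hcont b)) (hcont _) (hcont a)
      htriangle).trans (add_le_add (hball hmem r hr) (hball (mem_ball_self hε) r hr))
  rw [circMeanR_const_mul, abs_of_pos ht] at hsum
  rw [div_lt_iff₀' (by positivity)] at hlarge
  linarith

lemma exists_forall_not_memHardy_norm_lacunarySum :
    ∃ a : ℕ →ᵇ ℝ, ∀ q > 0, ¬ MemHardy q fun z => ‖lacunarySum a z‖ := by
  by_contra! hall
  have hmeagre : IsMeagre {a : ℕ →ᵇ ℝ | ∃ q > 0, MemHardy q fun z => ‖lacunarySum a z‖} := by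
    rw [setOf_exists_memHardy_eq_iUnion continuousOn_norm_lacunarySum]
    refine isMeagre_iUnion fun m => isMeagre_iUnion fun k => IsNowhereDense.isMeagre ?_
    have hm : (0 : ℝ) < 1 / (m + 1) := Nat.one_div_pos_of_nat
    have hm1 : 1 / ((m : ℝ) + 1) ≤ 1 := (div_le_one (by positivity)).2 (by simp)
    rw [(isClosed_setOf_forall_circMeanR_le
      (fun r hr => continuous_circMeanR_norm_lacunarySum hm.le hr) k).isNowhereDense_iff]
    exact interior_setOf_circMeanR_lacunarySum_le hm hm1 k
  rw [eq_univ_of_forall (s := {a | _}) hall] at hmeagre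
  exact not_isMeagre_of_isOpen isOpen_univ univ_nonempty hmeagre

end UnboundedMeans

namespace HarmV

/-- The lacunary series with coefficients `a`, as an element of `⋂_{p<1} h^p`. -/
def ofLacunary (a : ℕ →ᵇ ℝ) : HarmV :=
  ⟨lacunarySum a, differentiableOn_lacunarySum a, by rw [lacunarySum_apply_zero, zero_im],
    fun _ hp => memHardy_re_lacunarySum a hp⟩

lemma conjNoHardy_nonempty : conjNoHardy.Nonempty := by
  obtain ⟨a, ha⟩ := exists_forall_not_memHardy_norm_lacunarySum
  refine ⟨ofLacunary a, fun q hq him => ?_⟩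
  let s := min q (1 / 2)
  have hs : s ∈ Ioo (0 : ℝ) 1 :=
    ⟨lt_min hq one_half_pos, (min_le_right _ _).trans_lt one_half_lt_one⟩
  have him_s := him.mono_exponent hs.1.le (min_le_left _ _) (ofLacunary a).continuousOn_im
  refine ha s hs.1 (.of_abs_le_add hs.1.le hs.2.le (continuousOn_norm_lacunarySum a)
    (ofLacunary a).continuousOn_re (ofLacunary a).continuousOn_im (fun z => ?_)
    ((ofLacunary a).memHardy_re hs) him_s)
  rw [abs_norm]
  exact norm_le_abs_re_add_abs_im _

end HarmV

/-- Theorem 3.7: the set `ℒ` of `u ∈ ⋂_{p<1} h^p` whose normalized harmonic conjugate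
`ũ = Im f` belongs to no `h^q` with `q > 0` is a `G_δ` dense subset of `⋂_{p<1} h^p`. -/
theorem conjugate_in_no_hq_generic :
    @IsGδ HarmV (ballTopology harmDist)
      {f : HarmV | ∀ q : ℝ, 0 < q → ∀ C : ℝ, ∃ r ∈ Set.Ioo (0 : ℝ) 1,
        C < circMeanR q (fun z => (f.1 z).im) r} ∧
    @Dense HarmV (ballTopology harmDist)
      {f : HarmV | ∀ q : ℝ, 0 < q → ∀ C : ℝ, ∃ r ∈ Set.Ioo (0 : ℝ) 1,
        C < circMeanR q (fun z => (f.1 z).im) r} := by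
  have hset : {f : HarmV | ∀ q : ℝ, 0 < q → ∀ C : ℝ, ∃ r ∈ Set.Ioo (0 : ℝ) 1,
      C < circMeanR q (fun z => (f.1 z).im) r} = HarmV.conjNoHardy := by
    simp only [HarmV.conjNoHardy, MemHardy, not_exists, not_forall, not_le, exists_prop, gt_iff_lt]
  have htop : ballTopology harmDist = UniformSpace.toTopologicalSpace := ballTopology_dist
  rw [hset, htop]
  exact ⟨HarmV.isGδ_conjNoHardy, HarmV.dense_conjNoHardy HarmV.conjNoHardy_nonempty⟩

end
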